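/- arXiv:2409.06849 — 2 statements merged into one kernel-verified Lean document; each statement's English description precedes it below -/
import Mathlib

section
/- Let M ∈ ℤ^{d×d} be a nonnegative primitive matrix whose spectral radius Λ satisfies Λ > 1, let z ∈ ℝ^d be a positive left eigenvector of M for Λ (i.e., zM = Λz), and let e = (1,1,…,1) ∈ ℝ^d. Suppose (x_n), (y_n), (ℓ_n) are sequences of nonnegative integer column vectors in ℤ^d with y_0 ≠ 0, satisfying x_{n+1} = M x_n + ℓ_n and y_{n+1} = M y_n for all n ∈ ℕ, and (ℓ_n) is purely periodic with period p ∈ ℕ, p ≥ 1. Then lim_{n→∞} (e x_n)/(e y_n) = (z c + (Λ^p − 1) z x_0) / ((Λ^p − 1) z y_0), where c = M^{p−1}ℓ_0 + M^{p−2}ℓ_1 + ⋯ + Mℓ_{p−2} + ℓ_{p−1}. -/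
namespace RichRT

variable {A : Type*}

/-- The word `w` occurs in the sequence `u` at position `j`. -/
def OccursAt (w : List A) (u : ℕ → A) (j : ℕ) : Prop :=
  w = (List.range w.length).map fun t => u (j + t)

/-- `w` is a factor of the infinite sequence `u`. -/
def IsFactorS (w : List A) (u : ℕ → A) : Prop :=
  ∃ j : ℕ, OccursAt w u j

/-- `u` is recurrent: every factor occurs infinitely often. -/
def Recurrent (u : ℕ → A) : Prop :=
  ∀ w : List A, IsFactorS w u → ∀ N : ℕ, ∃ j, N ≤ j ∧ OccursAt w u j

/-- The number of distinct palindromic factors of a finite word. -/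
noncomputable def palCount (w : List A) : ℕ :=
  Set.ncard {p : List A | p <:+: w ∧ p.reverse = p}

/-- A finite word of length `n` is rich if it has exactly `n+1` palindromic factors. -/
def RichWord (w : List A) : Prop := palCount w = w.length + 1

/-- A sequence is rich if all its factors are rich. -/
def RichSeq (u : ℕ → A) : Prop := ∀ w : List A, IsFactorS w u → RichWord w

/-- The prefix of length `k` of the periodic sequence `vvv⋯`. -/
def powPref (v : List A) (k : ℕ) : List A := ((List.replicate k v).flatten).take k

/-- The set of exponents `k/|v|` of fractional powers `v^(k/|v|)` occurring in `u`,
with `|v| ≥ n`. -/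
def expSet (u : ℕ → A) (n : ℕ) : Set ℝ :=
  {x | ∃ (v : List A) (k : ℕ), v ≠ [] ∧ n ≤ v.length ∧
    IsFactorS (powPref v k) u ∧ x = (k : ℝ) / (v.length : ℝ)}

/-- The critical exponent of a sequence, with values in `EReal`. -/
noncomputable def critExp (u : ℕ → A) : EReal :=
  sSup ((fun x : ℝ => (x : EReal)) '' expSet u 0)

/-- The asymptotic critical exponent of a sequence: `⊤` if the critical exponent is `⊤`,
otherwise the limit (= infimum, by monotonicity) over `n` of the suprema of exponents of
powers `v^e` with `|v| ≥ n`. -/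
noncomputable def acritExp (u : ℕ → A) : EReal :=
  if critExp u = ⊤ then ⊤
  else ⨅ n : ℕ, sSup ((fun x : ℝ => (x : EReal)) '' expSet u n)

/-- The morphism `φ_d` on letters: `i ↦ 0(i+1)` for `i < d-1`, `d-1 ↦ 0(d-1)(d-1)`. -/
def phiL (d : ℕ) (i : ℕ) : List ℕ :=
  if i < d - 1 then [0, i + 1] else [0, d - 1, d - 1]

/-- The morphism `φ_d` on words. -/
def phiW (d : ℕ) (w : List ℕ) : List ℕ := w.flatMap (phiL d)

/-- `u` is the fixed point of `φ_d`: it begins with `0` and `φ_d(u) = u`, i.e. the image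
of every prefix of `u` is again a prefix of `u`. -/
def IsPhiFixed (d : ℕ) (u : ℕ → ℕ) : Prop :=
  u 0 = 0 ∧ ∀ m : ℕ, OccursAt (phiW d ((List.range m).map u)) u 0

/-- Left extensions of `w` in `u`. -/
def Lext (u : ℕ → ℕ) (w : List ℕ) : Set (List ℕ) :=
  {x | ∃ i : ℕ, x = i :: w ∧ IsFactorS x u}

/-- Right extensions of `w` in `u`. -/
def Rext (u : ℕ → ℕ) (w : List ℕ) : Set (List ℕ) :=
  {x | ∃ i : ℕ, x = w ++ [i] ∧ IsFactorS x u}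

/-- Both-sided extensions of `w` in `u`. -/
def Bext (u : ℕ → ℕ) (w : List ℕ) : Set (List ℕ) :=
  {x | ∃ i j : ℕ, x = i :: (w ++ [j]) ∧ IsFactorS x u}

/-- `w` is a bispecial factor of `u`. -/
def Bispecial (u : ℕ → ℕ) (w : List ℕ) : Prop :=
  IsFactorS w u ∧ 2 ≤ (Lext u w).ncard ∧ 2 ≤ (Rext u w).ncard

/-- The bilateral order `b(w) = #Bext(w) − #Lext(w) − #Rext(w) + 1`. -/
noncomputable def bord (u : ℕ → ℕ) (w : List ℕ) : ℤ :=
  ((Bext u w).ncard : ℤ) - ((Lext u w).ncard : ℤ) - ((Rext u w).ncard : ℤ) + 1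

/-- The palindromes `F_0 = ε`, `F_i = φ(F_{i-1})0`. -/
def Fword (d : ℕ) : ℕ → List ℕ
  | 0 => []
  | i + 1 => phiW d (Fword d i) ++ [0]

/-- Membership in the set `𝒯` of bispecial triplets. -/
def TripleMem (d : ℕ) (u : ℕ → ℕ) (t : ℕ × List ℕ × ℕ) : Prop :=
  Bispecial u t.2.1 ∧ t.1 < d - 1 ∧ t.2.2 < d - 1 ∧
    IsFactorS (t.1 :: t.2.1) u ∧ IsFactorS (t.2.1 ++ [t.2.2]) u

/-- The map `f` on triplets. -/
def fmap (d : ℕ) (t : ℕ × List ℕ × ℕ) : ℕ × List ℕ × ℕ :=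
  ((t.1 + 1) % (d - 1),
   (if t.1 = d - 2 then [d - 1] else []) ++ phiW d t.2.1 ++ [0] ++
     (if t.2.2 = d - 2 then [d - 1] else []),
   (t.2.2 + 1) % (d - 1))

/-- The initial triplets `T_k = (0, ε, k)` for `k ≤ d-2` and `T_{d-1} = (0, d-1, 0)`. -/
def Tinit (d k : ℕ) : ℕ × List ℕ × ℕ :=
  if k = d - 1 then (0, [d - 1], 0) else (0, ([] : List ℕ), k)

/-- The Parikh vector of a word. -/
def parikh (d : ℕ) (w : List ℕ) : Fin d → ℕ := fun i => w.count (i : ℕ)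

/-- The incidence matrix of `φ_d`. -/
def Mmat (d : ℕ) : Matrix (Fin d) (Fin d) ℕ := fun i j => (phiL d (j : ℕ)).count (i : ℕ)

/-- `r` is a return word to `w` in `u`. -/
def ReturnWord (u : ℕ → ℕ) (w r : List ℕ) : Prop :=
  ∃ j ℓ : ℕ, j < ℓ ∧ OccursAt w u j ∧ OccursAt w u ℓ ∧
    (∀ m, j < m → m < ℓ → ¬ OccursAt w u m) ∧
    r = (List.range (ℓ - j)).map fun t => u (j + t)

/-- `R` is a complete return word to `w` in `u`. -/
def CompleteReturn (u : ℕ → ℕ) (w R : List ℕ) : Prop :=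
  ∃ r : List ℕ, ReturnWord u w r ∧ R = r ++ w

/-!
Conjugating `Wᵀ / Λ` by `diagonal z` gives a primitive row-stochastic matrix, whose powers contract
the spread of every vector; hence `f W ^ n / Λ ^ n → α z` with `α > 0` for every positive row
vector `f`. Since `ℓ` is `p`-periodic, the differences `x (n + p) - x n` satisfy the homogeneous
recurrence, so `f (x (n + p) - x n) / Λ ^ n → α z (x p - x 0)`, where
`z (x p - x 0) = z c + (Λ ^ p - 1) z (x 0)`. As `Λ > 1`, the contraction `t ↦ Λ⁻ᵖ t` turns this
into `f (x n) / Λ ^ n → α z (x p - x 0) / (Λ ^ p - 1)`, while `f (y n) / Λ ^ n → α z (y 0)`; the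
factor `α` cancels in the quotient.
-/

open Filter Matrix Topology

section IntCast

variable {m n R : Type*} [Fintype n] [Ring R]

lemma intCast_comp_mulVec (M : Matrix m n ℤ) (v : n → ℤ) :
    ((↑) : ℤ → R) ∘ (M *ᵥ v) = M.map (↑) *ᵥ ((↑) ∘ v) :=
  funext fun i => (Int.castRingHom R).map_mulVec M v i

lemma map_pow_intCast [DecidableEq n] (M : Matrix n n ℤ) (k : ℕ) :
    (M ^ k).map ((↑) : ℤ → R) = M.map (↑) ^ k :=
  Matrix.map_pow M (Int.castRingHom R) k

end IntCast

lemma dotProduct_pos_of_pos_of_nonneg_of_ne_zero {ι R : Type*} [Fintype ι] [Semiring R]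
    [PartialOrder R] [IsStrictOrderedRing R] {z u : ι → R} (hz : ∀ i, 0 < z i) (hu : 0 ≤ u)
    (hu0 : u ≠ 0) : 0 < z ⬝ᵥ u := by
  obtain ⟨i, hi⟩ := Function.ne_iff.1 hu0
  exact Finset.sum_pos' (fun j _ => mul_nonneg (hz j).le (hu j))
    ⟨i, Finset.mem_univ i, mul_pos (hz i) ((hu i).lt_of_ne' hi)⟩

section Stochastic

variable {ι : Type*} [Fintype ι] [DecidableEq ι]

section OrderedRing

variable {R : Type*} [CommRing R] [LinearOrder R] [IsStrictOrderedRing R] {P : Matrix ι ι R}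
  {v : ι → R} {a δ : R}

lemma mulVec_apply_le_sub_of_mem_rowStochastic (hP : P ∈ rowStochastic R ι)
    (hδ : ∀ i j, δ ≤ P i j) (hv : ∀ j, v j ≤ a) (i j : ι) :
    (P *ᵥ v) i ≤ a - δ * (a - v j) := by
  have hdefect : ∑ l, P i l * (a - v l) = a - (P *ᵥ v) i := by
    simp only [mul_sub, Finset.sum_sub_distrib, ← Finset.sum_mul,
      sum_row_of_mem_rowStochastic hP, one_mul, mulVec, dotProduct]
  have hterm : P i j * (a - v j) ≤ ∑ l, P i l * (a - v l) :=
    Finset.single_le_sum (f := fun l => P i l * (a - v l))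
      (fun l _ => mul_nonneg (nonneg_of_mem_rowStochastic hP) (sub_nonneg.2 (hv l)))
      (Finset.mem_univ j)
  have hentry : δ * (a - v j) ≤ P i j * (a - v j) :=
    mul_le_mul_of_nonneg_right (hδ i j) (sub_nonneg.2 (hv j))
  linarith

lemma mulVec_apply_le_of_mem_rowStochastic (hP : P ∈ rowStochastic R ι)
    (hv : ∀ j, v j ≤ a) (i : ι) : (P *ᵥ v) i ≤ a := by
  simpa using mulVec_apply_le_sub_of_mem_rowStochastic hP
    (fun _ _ => nonneg_of_mem_rowStochastic hP) hv i i

lemma le_mulVec_apply_of_mem_rowStochastic (hP : P ∈ rowStochastic R ι)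
    (hv : ∀ j, a ≤ v j) (i : ι) : a ≤ (P *ᵥ v) i := by
  simpa [mulVec_neg] using
    mulVec_apply_le_of_mem_rowStochastic (v := -v) hP (fun j => neg_le_neg (hv j)) i

end OrderedRing

variable [Nonempty ι] {P : Matrix ι ι ℝ}

lemma antitone_iSup_pow_mulVec (hP : P ∈ rowStochastic ℝ ι) (v : ι → ℝ) :
    Antitone fun n => ⨆ i, (P ^ n *ᵥ v) i := by
  refine antitone_nat_of_succ_le fun n => ciSup_le fun i => ?_
  rw [pow_succ', ← mulVec_mulVec]
  exact mulVec_apply_le_of_mem_rowStochastic hP (le_ciSup (Set.finite_range _).bddAbove) i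

lemma monotone_iInf_pow_mulVec (hP : P ∈ rowStochastic ℝ ι) (v : ι → ℝ) :
    Monotone fun n => ⨅ i, (P ^ n *ᵥ v) i := by
  refine monotone_nat_of_le_succ fun n => le_ciInf fun i => ?_
  rw [pow_succ', ← mulVec_mulVec]
  exact le_mulVec_apply_of_mem_rowStochastic hP (ciInf_le (Set.finite_range _).bddBelow) i

lemma iSup_mulVec_le_sub_of_mem_rowStochastic (hP : P ∈ rowStochastic ℝ ι)
    {δ : ℝ} (hδ : ∀ i j, δ ≤ P i j) (v : ι → ℝ) :
    ⨆ i, (P *ᵥ v) i ≤ (⨆ i, v i) - δ * ((⨆ i, v i) - ⨅ i, v i) := by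
  obtain ⟨j, hj⟩ := exists_eq_ciInf_of_finite (f := v)
  rw [← hj]
  exact ciSup_le fun i => mulVec_apply_le_sub_of_mem_rowStochastic hP hδ
    (le_ciSup (Set.finite_range v).bddAbove) i j

theorem exists_tendsto_pow_mulVec_of_mem_rowStochastic (hP : P ∈ rowStochastic ℝ ι) {k : ℕ}
    (hk : ∀ i j, 0 < (P ^ k) i j) (v : ι → ℝ) :
    ∃ a, Tendsto (fun n => P ^ n *ᵥ v) atTop (𝓝 fun _ => a) := by
  set S : ℕ → ℝ := fun n => ⨆ i, (P ^ n *ᵥ v) i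
  set I : ℕ → ℝ := fun n => ⨅ i, (P ^ n *ᵥ v) i
  have hIv (n i) : I n ≤ (P ^ n *ᵥ v) i := ciInf_le (Set.finite_range _).bddBelow i
  have hvS (n i) : (P ^ n *ᵥ v) i ≤ S n := le_ciSup (Set.finite_range _).bddAbove i
  have hIS (n) : I n ≤ S n := (hIv n (Classical.arbitrary ι)).trans (hvS n _)
  have hSanti : Antitone S := antitone_iSup_pow_mulVec hP v
  have hImono : Monotone I := monotone_iInf_pow_mulVec hP v
  obtain ⟨δ, hδ, hδk⟩ : ∃ δ > 0, ∀ i j, δ ≤ (P ^ k) i j := by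
    obtain ⟨q, hq⟩ := Finite.exists_min fun q : ι × ι => (P ^ k) q.1 q.2
    exact ⟨_, hk q.1 q.2, fun i j => hq (i, j)⟩
  have hcontract (n) : S (n + k) ≤ S n - δ * (S n - I n) := by
    simpa only [S, I, mulVec_mulVec, ← pow_add, add_comm k n] using
      iSup_mulVec_le_sub_of_mem_rowStochastic (pow_mem hP k) hδk (P ^ n *ᵥ v)
  obtain ⟨s, hs⟩ : ∃ s, Tendsto S atTop (𝓝 s) := ⟨_, tendsto_atTop_ciInf hSanti
    ⟨I 0, Set.forall_mem_range.2 fun n => (hImono n.zero_le).trans (hIS n)⟩⟩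
  obtain ⟨m, hm⟩ : ∃ m, Tendsto I atTop (𝓝 m) := ⟨_, tendsto_atTop_ciSup hImono
    ⟨S 0, Set.forall_mem_range.2 fun n => (hIS n).trans (hSanti n.zero_le)⟩⟩
  have hms : m ≤ s := le_of_tendsto_of_tendsto' hm hs hIS
  have hgap : s ≤ s - δ * (s - m) := le_of_tendsto_of_tendsto'
    ((tendsto_add_atTop_iff_nat k).2 hs) (hs.sub ((hs.sub hm).const_mul δ)) hcontract
  obtain rfl : m = s := by nlinarith
  exact ⟨m, tendsto_pi_nhds.2 fun i =>
    tendsto_of_tendsto_of_tendsto_of_le_of_le hm hs (hIv · i) (hvS · i)⟩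

end Stochastic

section DoobTransform

variable {ι 𝕜 : Type*} [Field 𝕜]

/-- The Doob transform of a matrix `W` with respect to a left eigenvector `z` with eigenvalue `Λ`:
the conjugate `D⁻¹ (Λ⁻¹ Wᵀ) D` with `D = diagonal z`, written entrywise. The transpose turns the
left eigenvector of `W` into the constant right eigenvector of a row-stochastic matrix. -/
def doobTransform (W : Matrix ι ι 𝕜) (Λ : 𝕜) (z : ι → 𝕜) : Matrix ι ι 𝕜 :=
  of fun j i => z i * W i j / (Λ * z j)

variable [Fintype ι] {V W : Matrix ι ι 𝕜} {Λ μ : 𝕜} {z : ι → 𝕜}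

lemma doobTransform_mulVec_div (hz : ∀ i, z i ≠ 0) (f : ι → 𝕜) (j : ι) :
    (doobTransform W Λ z *ᵥ fun i => f i / z i) j = (f ᵥ* W) j / (Λ * z j) := by
  simp only [doobTransform, mulVec, vecMul, dotProduct, of_apply, Finset.sum_div]
  refine Finset.sum_congr rfl fun i _ => ?_
  have := hz i
  field_simp

lemma doobTransform_mul (hz : ∀ i, z i ≠ 0) :
    doobTransform V μ z * doobTransform W Λ z = doobTransform (W * V) (Λ * μ) z := by
  ext j i
  simp only [doobTransform, mul_apply, of_apply, Finset.mul_sum, Finset.sum_div]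
  refine Finset.sum_congr rfl fun l _ => ?_
  have := hz l
  field_simp

variable [DecidableEq ι]

lemma doobTransform_pow (hz : ∀ i, z i ≠ 0) (n : ℕ) :
    doobTransform W Λ z ^ n = doobTransform (W ^ n) (Λ ^ n) z := by
  induction n with
  | zero =>
    ext j i
    obtain rfl | hij := eq_or_ne i j
    · simp [doobTransform, hz]
    · simp [doobTransform, hij, hij.symm]
  | succ n ih => rw [pow_succ, ih, doobTransform_mul hz, ← pow_succ', ← pow_succ']

lemma doobTransform_mem_rowStochastic [LinearOrder 𝕜] [IsStrictOrderedRing 𝕜]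
    (hW : ∀ i j, 0 ≤ W i j) (hΛ : 0 < Λ) (hz : ∀ i, 0 < z i) (hzW : z ᵥ* W = Λ • z) :
    doobTransform W Λ z ∈ rowStochastic 𝕜 ι := by
  refine mem_rowStochastic_iff_sum.2 ⟨fun j i => ?_, fun j => ?_⟩
  · exact div_nonneg (mul_nonneg (hz i).le (hW i j)) (mul_pos hΛ (hz j)).le
  · have hcol : ∑ i, z i * W i j = Λ * z j := congrFun hzW j
    simp only [doobTransform, of_apply, ← Finset.sum_div, hcol]
    exact div_self (mul_pos hΛ (hz j)).ne'

end DoobTransform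

section PerronFrobenius

variable {ι : Type*} [Fintype ι] [DecidableEq ι] [Nonempty ι] {W : Matrix ι ι ℝ} {Λ : ℝ}
  {z f : ι → ℝ} {k : ℕ}

theorem exists_tendsto_vecMul_pow (hW : ∀ i j, 0 ≤ W i j)
    (hk : ∀ i j, 0 < (W ^ k) i j) (hΛ : 0 < Λ) (hz : ∀ i, 0 < z i) (hzW : z ᵥ* W = Λ • z)
    (hf : ∀ i, 0 < f i) :
    ∃ α > (0 : ℝ), Tendsto (fun n => (Λ ^ n)⁻¹ • (f ᵥ* W ^ n)) atTop (𝓝 (α • z)) := by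
  set P := doobTransform W Λ z
  have hz' (i) : z i ≠ 0 := (hz i).ne'
  have hP : P ∈ rowStochastic ℝ ι := doobTransform_mem_rowStochastic hW hΛ hz hzW
  have hPk (j i) : 0 < (P ^ k) j i := by
    rw [doobTransform_pow hz']
    exact div_pos (mul_pos (hz i) (hk i j)) (mul_pos (pow_pos hΛ k) (hz j))
  obtain ⟨α, hα⟩ := exists_tendsto_pow_mulVec_of_mem_rowStochastic hP hPk fun i => f i / z i
  rw [tendsto_pi_nhds] at hα
  obtain ⟨i₀, hi₀⟩ := Finite.exists_min fun i => f i / z i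
  have hα_ge : f i₀ / z i₀ ≤ α := ge_of_tendsto' (hα i₀) fun n =>
    le_mulVec_apply_of_mem_rowStochastic (pow_mem hP n) hi₀ i₀
  refine ⟨α, (div_pos (hf i₀) (hz i₀)).trans_le hα_ge, tendsto_pi_nhds.2 fun j => ?_⟩
  refine ((hα j).mul_const (z j)).congr fun n => ?_
  rw [doobTransform_pow hz', doobTransform_mulVec_div hz', Pi.smul_apply, smul_eq_mul]
  have := hz' j
  field_simp

theorem exists_tendsto_dotProduct_pow_mulVec_div_pow (hW : ∀ i j, 0 ≤ W i j)
    (hk : ∀ i j, 0 < (W ^ k) i j) (hΛ : 0 < Λ) (hz : ∀ i, 0 < z i) (hzW : z ᵥ* W = Λ • z)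
    (hf : ∀ i, 0 < f i) :
    ∃ α > (0 : ℝ), ∀ u : ι → ℝ,
      Tendsto (fun n => f ⬝ᵥ (W ^ n *ᵥ u) / Λ ^ n) atTop (𝓝 (α * (z ⬝ᵥ u))) := by
  obtain ⟨α, hα, hlim⟩ := exists_tendsto_vecMul_pow hW hk hΛ hz hzW hf
  refine ⟨α, hα, fun u => ?_⟩
  have hdot : Continuous fun w : ι → ℝ => w ⬝ᵥ u := continuous_id.dotProduct continuous_const
  rw [← smul_eq_mul, ← smul_dotProduct]
  refine ((hdot.tendsto _).comp hlim).congr fun n => ?_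
  rw [Function.comp_apply, smul_dotProduct, smul_eq_mul, dotProduct_mulVec, inv_mul_eq_div]

end PerronFrobenius

section Recurrence

variable {ι R : Type*} [Fintype ι] [DecidableEq ι]

lemma vecMul_pow_of_vecMul_eq_smul [CommSemiring R] {W : Matrix ι ι R} {Λ : R} {z : ι → R}
    (hzW : z ᵥ* W = Λ • z) (n : ℕ) : z ᵥ* W ^ n = Λ ^ n • z := by
  induction n with
  | zero => simp
  | succ n ih => rw [pow_succ, ← vecMul_vecMul, ih, smul_vecMul, hzW, smul_smul, pow_succ]

lemma eq_pow_mulVec_of_succ [Semiring R] {W : Matrix ι ι R} {y : ℕ → ι → R}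
    (hy : ∀ n, y (n + 1) = W *ᵥ y n) (n : ℕ) : y n = W ^ n *ᵥ y 0 := by
  induction n with
  | zero => simp
  | succ n ih => rw [hy, ih, mulVec_mulVec, pow_succ']

lemma eq_pow_mulVec_add_sum_of_succ [Semiring R] {W : Matrix ι ι R} {x ℓ : ℕ → ι → R}
    (hx : ∀ n, x (n + 1) = W *ᵥ x n + ℓ n) (n : ℕ) :
    x n = W ^ n *ᵥ x 0 + ∑ m ∈ Finset.range n, W ^ (n - 1 - m) *ᵥ ℓ m := by
  induction n with
  | zero => simp
  | succ n ih =>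
    have hshift : ∀ m ∈ Finset.range n,
        W *ᵥ (W ^ (n - 1 - m) *ᵥ ℓ m) = W ^ (n - m) *ᵥ ℓ m := fun m hm => by
      have hm := Finset.mem_range.1 hm
      rw [mulVec_mulVec, ← pow_succ', show n - 1 - m + 1 = n - m by omega]
    rw [hx, ih, mulVec_add, mulVec_mulVec, ← pow_succ', mulVec_sum, Finset.sum_congr rfl hshift,
      Finset.sum_range_succ]
    simp [add_assoc]

end Recurrence

section Tendsto

lemma exists_le_add_mul_pow {𝕜 : Type*} [Field 𝕜] [LinearOrder 𝕜] [IsStrictOrderedRing 𝕜]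
    {u : ℕ → 𝕜} {ρ η : 𝕜} (hρ : 0 < ρ) {p N : ℕ} (hp : p ≠ 0)
    (hu : ∀ n ≥ N, u (n + p) ≤ ρ ^ p * u n + (1 - ρ ^ p) * η) :
    ∃ C, ∀ n ≥ N, u n ≤ η + C * ρ ^ n := by
  set C := ∑ m ∈ Finset.range (N + p), |u m - η| / ρ ^ m
  refine ⟨C, fun n => ?_⟩
  induction n using Nat.strong_induction_on with
  | h n ih =>
    intro hn
    obtain hlt | hge := lt_or_ge n (N + p)
    · have hC : |u n - η| / ρ ^ n ≤ C :=
        Finset.single_le_sum (f := fun m => |u m - η| / ρ ^ m) (fun m _ => by positivity)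
          (Finset.mem_range.2 hlt)
      rw [div_le_iff₀ (by positivity)] at hC
      linarith [le_abs_self (u n - η)]
    · obtain ⟨m, rfl⟩ := Nat.exists_eq_add_of_le' (le_of_add_le_right hge)
      have hm : N ≤ m := by omega
      calc u (m + p) ≤ ρ ^ p * u m + (1 - ρ ^ p) * η := hu m hm
        _ ≤ ρ ^ p * (η + C * ρ ^ m) + (1 - ρ ^ p) * η := by
          gcongr
          exact ih m (by omega) hm
        _ = η + C * ρ ^ (m + p) := by ring

lemma tendsto_zero_of_tendsto_sub_pow_smul {E : Type*} [SeminormedAddCommGroup E]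
    [NormedSpace ℝ E] {s : ℕ → E} {ρ : ℝ} (hρ : 0 < ρ) (hρ1 : ρ < 1) {p : ℕ} (hp : p ≠ 0)
    (hs : Tendsto (fun n => s (n + p) - ρ ^ p • s n) atTop (𝓝 0)) :
    Tendsto s atTop (𝓝 0) := by
  have hρp : 0 < 1 - ρ ^ p := sub_pos.2 (pow_lt_one₀ hρ.le hρ1 hp)
  refine Metric.tendsto_nhds.2 fun ε hε => ?_
  obtain ⟨N, hN⟩ := eventually_atTop.1
    (Metric.tendsto_nhds.1 hs ((1 - ρ ^ p) * (ε / 2)) (by positivity))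
  have hstep (n) (hn : n ≥ N) : ‖s (n + p)‖ ≤ ρ ^ p * ‖s n‖ + (1 - ρ ^ p) * (ε / 2) := by
    calc ‖s (n + p)‖ = ‖ρ ^ p • s n + (s (n + p) - ρ ^ p • s n)‖ := by rw [add_sub_cancel]
      _ ≤ ‖ρ ^ p • s n‖ + ‖s (n + p) - ρ ^ p • s n‖ := norm_add_le _ _
      _ ≤ ρ ^ p * ‖s n‖ + (1 - ρ ^ p) * (ε / 2) := by
        rw [norm_smul, Real.norm_of_nonneg (by positivity)]
        gcongr
        simpa only [dist_zero_right] using (hN n hn).le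
  obtain ⟨C, hC⟩ := exists_le_add_mul_pow (u := fun n => ‖s n‖) hρ hp hstep
  have hgeom : Tendsto (fun n => C * ρ ^ n) atTop (𝓝 0) := by
    simpa using (tendsto_pow_atTop_nhds_zero_of_lt_one hρ.le hρ1).const_mul C
  filter_upwards [eventually_ge_atTop N, hgeom.eventually_lt_const (half_pos hε)] with n hn hlt
  rw [dist_zero_right]
  linarith [hC n hn]

theorem tendsto_div_pow_of_tendsto_sub_div_pow {a : ℕ → ℝ} {Λ L : ℝ} (hΛ : 1 < Λ) {p : ℕ}
    (hp : p ≠ 0) (ha : Tendsto (fun n => (a (n + p) - a n) / Λ ^ n) atTop (𝓝 L)) :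
    Tendsto (fun n => a n / Λ ^ n) atTop (𝓝 (L / (Λ ^ p - 1))) := by
  have hΛ0 : 0 < Λ := one_pos.trans hΛ
  have hΛp : Λ ^ p - 1 ≠ 0 := (sub_pos.2 (one_lt_pow₀ hΛ hp)).ne'
  refine tendsto_sub_nhds_zero_iff.1 <|
    tendsto_zero_of_tendsto_sub_pow_smul (inv_pos.2 hΛ0) (inv_lt_one_of_one_lt₀ hΛ) hp ?_
  have hlim : Tendsto (fun n => (Λ ^ p)⁻¹ * ((a (n + p) - a n) / Λ ^ n - L)) atTop (𝓝 0) := by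
    simpa using (ha.sub_const L).const_mul (Λ ^ p)⁻¹
  refine hlim.congr fun n => ?_
  rw [smul_eq_mul, inv_pow, pow_add]
  field_simp
  ring

end Tendsto

section PeriodicForcing

variable {ι : Type*} [Fintype ι] [DecidableEq ι]

lemma add_sub_eq_pow_mulVec_of_periodic {R : Type*} [Ring R] {W : Matrix ι ι R}
    {x ℓ : ℕ → ι → R} (hx : ∀ n, x (n + 1) = W *ᵥ x n + ℓ n) {p : ℕ}
    (hℓ : Function.Periodic ℓ p) (n : ℕ) : x (n + p) - x n = W ^ n *ᵥ (x p - x 0) := by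
  have hsucc (n) : x (n + 1 + p) - x (n + 1) = W *ᵥ (x (n + p) - x n) := by
    rw [add_right_comm, hx, hx, hℓ, mulVec_sub, add_sub_add_right_eq_sub]
  simpa using eq_pow_mulVec_of_succ (y := fun n => x (n + p) - x n) hsucc n

lemma dotProduct_sub_initial_of_vecMul_eq_smul {R : Type*} [CommRing R] {W : Matrix ι ι R} {Λ : R}
    {z : ι → R} (hzW : z ᵥ* W = Λ • z) {x ℓ : ℕ → ι → R}
    (hx : ∀ n, x (n + 1) = W *ᵥ x n + ℓ n) (n : ℕ) :
    z ⬝ᵥ (x n - x 0) =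
      z ⬝ᵥ (∑ m ∈ Finset.range n, W ^ (n - 1 - m) *ᵥ ℓ m) + (Λ ^ n - 1) * (z ⬝ᵥ x 0) := by
  rw [eq_pow_mulVec_add_sum_of_succ hx n, dotProduct_sub, dotProduct_add, dotProduct_mulVec,
    vecMul_pow_of_vecMul_eq_smul hzW, smul_dotProduct, smul_eq_mul]
  ring

theorem statement17_general {W : Matrix ι ι ℝ} (hW : ∀ i j, 0 ≤ W i j) {k : ℕ}
    (hk : ∀ i j, 0 < (W ^ k) i j) {Λ : ℝ} (hΛ : 1 < Λ) {z : ι → ℝ} (hz : ∀ i, 0 < z i)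
    (hzW : z ᵥ* W = Λ • z) {x y ℓ : ℕ → ι → ℝ} (hy0 : z ⬝ᵥ y 0 ≠ 0)
    (hx : ∀ n, x (n + 1) = W *ᵥ x n + ℓ n) (hy : ∀ n, y (n + 1) = W *ᵥ y n)
    {p : ℕ} (hp : p ≠ 0) (hℓ : Function.Periodic ℓ p) {f : ι → ℝ} (hf : ∀ i, 0 < f i) :
    Tendsto (fun n => (f ⬝ᵥ x n) / (f ⬝ᵥ y n)) atTop
      (𝓝 ((z ⬝ᵥ (∑ m ∈ Finset.range p, W ^ (p - 1 - m) *ᵥ ℓ m) + (Λ ^ p - 1) * (z ⬝ᵥ x 0)) /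
        ((Λ ^ p - 1) * (z ⬝ᵥ y 0)))) := by
  have hΛ0 : 0 < Λ := one_pos.trans hΛ
  have : Nonempty ι := not_isEmpty_iff.1 fun _ => hy0 (by simp [dotProduct])
  obtain ⟨α, hα, hpow⟩ :=
    exists_tendsto_dotProduct_pow_mulVec_div_pow hW hk hΛ0 hz hzW hf
  have hX : Tendsto (fun n => f ⬝ᵥ x n / Λ ^ n) atTop
      (𝓝 (α * (z ⬝ᵥ (x p - x 0)) / (Λ ^ p - 1))) := by
    refine tendsto_div_pow_of_tendsto_sub_div_pow hΛ hp ((hpow (x p - x 0)).congr fun n => ?_)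
    rw [← add_sub_eq_pow_mulVec_of_periodic hx hℓ, dotProduct_sub]
  have hY : Tendsto (fun n => f ⬝ᵥ y n / Λ ^ n) atTop (𝓝 (α * (z ⬝ᵥ y 0))) :=
    (hpow (y 0)).congr fun n => by rw [← eq_pow_mulVec_of_succ hy]
  rw [← dotProduct_sub_initial_of_vecMul_eq_smul hzW hx]
  convert hX.div hY (mul_ne_zero hα.ne' hy0) using 2 with n
  · exact (div_div_div_cancel_right₀ (pow_pos hΛ0 n).ne' _ _).symm
  · field_simp

end PeriodicForcing

/-- Let `M ∈ ℤ^{d×d}` be a nonnegative primitive matrix with spectral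
radius `Λ > 1` and positive left eigenvector `z` for `Λ` (by Perron–Frobenius, a
nonnegative primitive matrix having a positive left eigenvector for `Λ` exactly means
`Λ` is its spectral radius). If `(x_n)`, `(y_n)`, `(ℓ_n)` are nonnegative integer vector
sequences with `y_0 ≠ 0`, `x_{n+1} = M x_n + ℓ_n`, `y_{n+1} = M y_n`, and `(ℓ_n)` purely
periodic with period `p ≥ 1`, then `(e x_n)/(e y_n)` tends to
`(z c + (Λ^p − 1) z x_0) / ((Λ^p − 1) z y_0)` where `c = ∑_{m<p} M^{p−1−m} ℓ_m`. -/
theorem statement17 (d : ℕ) (M : Matrix (Fin d) (Fin d) ℤ)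
    (hM0 : ∀ i j, 0 ≤ M i j) (hprim : ∃ k : ℕ, ∀ i j, 0 < (M ^ k) i j)
    (Λ : ℝ) (hΛ : 1 < Λ) (z : Fin d → ℝ) (hz : ∀ i, 0 < z i)
    (hzM : Matrix.vecMul z (M.map (Int.cast : ℤ → ℝ)) = Λ • z)
    (x y ℓ : ℕ → Fin d → ℤ)
    (hx0 : ∀ n i, 0 ≤ x n i) (hy0 : ∀ n i, 0 ≤ y n i) (hl0 : ∀ n i, 0 ≤ ℓ n i)
    (hy00 : y 0 ≠ 0)
    (hx : ∀ n, x (n + 1) = M.mulVec (x n) + ℓ n)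
    (hy : ∀ n, y (n + 1) = M.mulVec (y n))
    (p : ℕ) (hp : 1 ≤ p) (hper : ∀ n, ℓ (n + p) = ℓ n) :
    Filter.Tendsto
      (fun n : ℕ => (∑ i, ((x n i : ℤ) : ℝ)) / (∑ i, ((y n i : ℤ) : ℝ)))
      Filter.atTop
      (nhds (((∑ i, z i *
          (((∑ m ∈ Finset.range p, (M ^ (p - 1 - m)).mulVec (ℓ m)) i : ℤ) : ℝ)) +
            (Λ ^ p - 1) * ∑ i, z i * ((x 0 i : ℤ) : ℝ)) /
          ((Λ ^ p - 1) * ∑ i, z i * ((y 0 i : ℤ) : ℝ)))) := by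
  obtain ⟨k, hk⟩ := hprim
  set W : Matrix (Fin d) (Fin d) ℝ := M.map (↑)
  set X : ℕ → Fin d → ℝ := fun n => (↑) ∘ x n
  set Y : ℕ → Fin d → ℝ := fun n => (↑) ∘ y n
  set L : ℕ → Fin d → ℝ := fun n => (↑) ∘ ℓ n
  have hX (n) : X (n + 1) = W *ᵥ X n + L n := by
    simp only [X, W, L, hx, ← intCast_comp_mulVec]
    ext; simp
  have hY (n) : Y (n + 1) = W *ᵥ Y n := by simp only [Y, W, hy, ← intCast_comp_mulVec]
  have hWk (i j) : 0 < (W ^ k) i j := by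
    simpa only [W, ← map_pow_intCast, map_apply, Int.cast_pos] using hk i j
  have hL : Function.Periodic L p := fun n => by simp only [L, hper n]
  have hzY : 0 < z ⬝ᵥ Y 0 :=
    dotProduct_pos_of_pos_of_nonneg_of_ne_zero hz (fun i => Int.cast_nonneg (hy0 0 i)) fun h =>
      hy00 (funext fun i => Int.cast_eq_zero.1 (congrFun h i))
  have hlim := statement17_general (W := W) (fun i j => Int.cast_nonneg (hM0 i j)) hWk hΛ hz hzM
    hzY.ne' hX hY (Nat.one_le_iff_ne_zero.1 hp) hL (f := 1) fun _ => one_pos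
  simpa [dotProduct, X, Y, L, W, ← map_pow_intCast, ← intCast_comp_mulVec] using hlim
end RichRT
end

section
/- Let d ≥ 3, fix k ∈ {0,…,d−1}, and for every n ∈ ℕ let w_n be the middle component of f^n(T_{d−1−k}) and let r_n be a shortest return word to w_n in u_d. Then limsup_{n→∞} |w_n|/|r_n| ≤ 1/(3 − Λ_d), where Λ_d is the unique real number in (2,3) satisfying Λ_d^{d−1}(Λ_d − 2)^2 = 1; moreover equality limsup_{n→∞} |w_n|/|r_n| = 1/(3 − Λ_d) holds for k = 0 and for k = d−1. -/
namespace RichRT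

variable {A : Type*}

/-! The letter `0` marks the starts of the blocks in `u = φ(u_0)φ(u_1)φ(u_2)⋯`. Hence every
occurrence of the middle word `w_n` of `fⁿ(T)` comes from an occurrence of the middle word of
`T`, and there is a word `x_n` such that, whenever `w_n` occurs at `t`, the word `u_0⋯u_{t-1}
x_n` is the `φⁿ`-image of a prefix of `u`. Gaps between occurrences of `w_n` are therefore
lengths of `φⁿ`-images of factors of `u`. For `T = T_j` and large `n` such a factor starts
with a letter `≥ j`, so return words to `w_n` have length at least `|φⁿ(j)|`; for `j = 0` and
`j = d - 1` this value is attained, by occurrences that come from the factor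
`0(d-1)(d-1)0(d-1)`.

Both `|w_n|` and `|φⁿ(j)|` grow like `C Λⁿ` times a weight, with the same constant `C`: the
weight of a letter is given by the left eigenvector of the incidence matrix, and the weight of
a triplet is an extension of it that `f` multiplies by `Λ`. The quotient of the two weights is
`1 / (3 - Λ)`. -/

/-! ### Occurrences and prefixes -/

section Occurrences

variable {u : ℕ → A} {v w : List A} {i j : ℕ}

/-- The prefix of length `n` of the sequence `u`. -/
def seqPrefix (u : ℕ → A) (n : ℕ) : List A := (List.range n).map u

@[simp]
theorem length_seqPrefix (u : ℕ → A) (n : ℕ) : (seqPrefix u n).length = n := by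
  simp [seqPrefix]

theorem seqPrefix_add (u : ℕ → A) (m n : ℕ) :
    seqPrefix u (m + n) = seqPrefix u m ++ (List.range n).map fun t => u (m + t) := by
  simp [seqPrefix, List.range_add, Function.comp_def]

theorem seqPrefix_succ (u : ℕ → A) (n : ℕ) : seqPrefix u (n + 1) = seqPrefix u n ++ [u n] := by
  simp [seqPrefix_add]

theorem occursAt_iff_seqPrefix_append :
    OccursAt w u j ↔ seqPrefix u j ++ w = seqPrefix u (j + w.length) := by
  rw [seqPrefix_add, List.append_cancel_left_eq, OccursAt]

theorem occursAt_append :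
    OccursAt (v ++ w) u j ↔ OccursAt v u j ∧ OccursAt w u (j + v.length) := by
  simp only [OccursAt, List.length_append, List.range_add, List.map_append, List.map_map,
    Function.comp_def, ← Nat.add_assoc]
  exact ⟨fun h => List.append_inj h (by simp), fun h => congrArg₂ (· ++ ·) h.1 h.2⟩

theorem occursAt_nil (u : ℕ → A) (j : ℕ) : OccursAt [] u j := by
  simp [OccursAt]

theorem occursAt_singleton {a : A} : OccursAt [a] u j ↔ u j = a := by
  simp [OccursAt, eq_comm]

theorem occursAt_cons {a : A} : OccursAt (a :: w) u j ↔ u j = a ∧ OccursAt w u (j + 1) := by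
  rw [← List.singleton_append, occursAt_append, occursAt_singleton, List.length_singleton]

theorem OccursAt.apply_mem (h : OccursAt w u j) {t : ℕ} (ht : t < w.length) : u (j + t) ∈ w := by
  rw [h]
  exact List.mem_map_of_mem (List.mem_range.mpr ht)

theorem IsFactorS.of_infix (hw : IsFactorS w u) (hvw : v <:+: w) : IsFactorS v u := by
  obtain ⟨j, hj⟩ := hw
  obtain ⟨x, y, rfl⟩ := hvw
  exact ⟨_, (occursAt_append.mp (occursAt_append.mp hj).1).2⟩

end Occurrences

/-! ### Growth of the iterates of a morphism -/

section Growth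

variable {σ : A → List A} {f g ℓ : A → ℝ} {o : A} {L M lo hi : ℝ}

/-- The length `|σⁿ(w)|`, where the map `σ` on letters is extended to a morphism on words. -/
def imageLength (σ : A → List A) (n : ℕ) (w : List A) : ℕ := ((List.flatMap σ)^[n] w).length

theorem iterate_flatMap_append (σ : A → List A) (n : ℕ) (v w : List A) :
    (List.flatMap σ)^[n] (v ++ w) = (List.flatMap σ)^[n] v ++ (List.flatMap σ)^[n] w := by
  induction n generalizing v w with
  | zero => rfl
  | succ n ih => simp only [Function.iterate_succ_apply, List.flatMap_append, ih]

theorem imageLength_zero (σ : A → List A) (w : List A) : imageLength σ 0 w = w.length := rfl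

theorem imageLength_succ (σ : A → List A) (n : ℕ) (w : List A) :
    imageLength σ (n + 1) w = imageLength σ n (w.flatMap σ) := rfl

theorem imageLength_nil (σ : A → List A) (n : ℕ) : imageLength σ n [] = 0 :=
  congrArg List.length (Function.iterate_fixed (f := List.flatMap σ) List.flatMap_nil n)

theorem imageLength_append (σ : A → List A) (n : ℕ) (v w : List A) :
    imageLength σ n (v ++ w) = imageLength σ n v + imageLength σ n w := by
  simp [imageLength, iterate_flatMap_append]

theorem imageLength_cons (σ : A → List A) (n : ℕ) (a : A) (w : List A) :
    imageLength σ n (a :: w) = imageLength σ n [a] + imageLength σ n w :=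
  imageLength_append σ n [a] w

theorem imageLength_pos (hσ : ∀ c, σ c ≠ []) (n : ℕ) {w : List A} (hw : w ≠ []) :
    0 < imageLength σ n w := by
  induction n generalizing w with
  | zero => exact List.length_pos_of_ne_nil hw
  | succ _ ih =>
    refine ih fun h => ?_
    obtain ⟨c, hc⟩ := List.exists_mem_of_ne_nil w hw
    exact hσ c (List.flatMap_eq_nil_iff.mp h c hc)

theorem monotone_imageLength_seqPrefix (σ : A → List A) (n : ℕ) (u : ℕ → A) :
    Monotone fun i => imageLength σ n (seqPrefix u i) :=
  monotone_nat_of_le_succ fun i => by simp [seqPrefix_succ, imageLength_append]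

/-- The weight of a word: the additive extension to words of a weight function on letters. -/
def weight (ℓ : A → ℝ) (w : List A) : ℝ := (w.map ℓ).sum

@[simp]
theorem weight_nil (ℓ : A → ℝ) : weight ℓ [] = 0 := rfl

@[simp]
theorem weight_cons (ℓ : A → ℝ) (a : A) (w : List A) : weight ℓ (a :: w) = ℓ a + weight ℓ w := by
  simp [weight]

theorem weight_append (ℓ : A → ℝ) (v w : List A) :
    weight ℓ (v ++ w) = weight ℓ v + weight ℓ w := by
  simp [weight]

theorem weight_const_mul (r : ℝ) (ℓ : A → ℝ) (w : List A) :
    weight (fun c => r * ℓ c) w = r * weight ℓ w :=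
  List.sum_map_mul_left w ℓ r

theorem weight_mono (h : ∀ c, f c ≤ g c) (w : List A) : weight f w ≤ weight g w :=
  List.sum_le_sum fun c _ => h c

theorem weight_flatMap (hσ : ∀ c, weight ℓ (σ c) = L * ℓ c) (w : List A) :
    weight ℓ (w.flatMap σ) = L * weight ℓ w := by
  induction w with
  | nil => simp
  | cons a w ih => rw [List.flatMap_cons, weight_append, hσ, ih, weight_cons, mul_add]

theorem weight_imageLength (σ : A → List A) (n : ℕ) (w : List A) :
    weight (fun c => (imageLength σ n [c] : ℝ)) w = imageLength σ n w := by
  induction w with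
  | nil => simp [imageLength_nil]
  | cons a w ih => rw [weight_cons, ih, imageLength_cons σ n a w, Nat.cast_add]

theorem abs_weight_sub_le {C K : ℝ} (h : ∀ c, |f c - C * ℓ c| ≤ K * ℓ c) (w : List A) :
    |weight f w - C * weight ℓ w| ≤ K * weight ℓ w := by
  induction w with
  | nil => simp
  | cons a w ih =>
    rw [weight_cons, weight_cons, mul_add, mul_add, add_sub_add_comm]
    exact (abs_add_le _ _).trans (add_le_add (h a) ih)

/-- A weight `f` with `lo * ℓ ≤ f ≤ hi * ℓ` satisfies better bounds on the words `σ(c)`, because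
all of them contain the same letter `o`: the slack of `f` at `o` is gained. -/
theorem weight_image_mem_Icc (hσo : ∀ c, ∃ v, σ c = o :: v) (ho : ℓ o = 1)
    (hσ : ∀ c, weight ℓ (σ c) = L * ℓ c) (hf : ∀ c, f c ∈ Set.Icc (lo * ℓ c) (hi * ℓ c)) (c : A) :
    weight f (σ c) ∈ Set.Icc (lo * (L * ℓ c) + (f o - lo)) (hi * (L * ℓ c) - (hi - f o)) := by
  obtain ⟨v, hv⟩ := hσo c
  have hℓv : weight ℓ v = L * ℓ c - 1 := by rw [← hσ c, hv, weight_cons, ho]; ring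
  have hlo := weight_mono (fun c => (hf c).1) v
  have hhi := weight_mono (fun c => (hf c).2) v
  rw [weight_const_mul, hℓv] at hlo hhi
  rw [hv, weight_cons]
  constructor <;> linarith

/-- Since the letter `o` has a share of at least `1 / (L * M)` in the weight of each `σ(c)`,
averaging over `σ(c)` contracts the interval of possible values of `f / ℓ` by `1 - 1 / (L * M)`. -/
theorem weight_image_div_mem_Icc (hL : 0 < L) (hσo : ∀ c, ∃ v, σ c = o :: v) (ho : ℓ o = 1)
    (hσ : ∀ c, weight ℓ (σ c) = L * ℓ c) (hℓ : ∀ c, ℓ c ∈ Set.Icc 1 M)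
    (hf : ∀ c, f c ∈ Set.Icc (lo * ℓ c) (hi * ℓ c)) (c : A) :
    weight f (σ c) / L ∈ Set.Icc ((lo + 1 / (L * M) * (f o - lo)) * ℓ c)
      ((hi - 1 / (L * M) * (hi - f o)) * ℓ c) := by
  have hM : 0 < M := one_pos.trans_le ((hℓ c).1.trans (hℓ c).2)
  have hshare : 1 / (L * M) * (L * ℓ c) ≤ 1 := by
    rw [mul_comm L M, one_div_mul_eq_div, mul_comm M L, mul_div_mul_left _ _ hL.ne',
      div_le_one hM]
    exact (hℓ c).2
  have hfo := hf o
  rw [ho, mul_one, mul_one] at hfo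
  have hlo := mul_le_mul_of_nonneg_right hshare (sub_nonneg.mpr hfo.1)
  have hhi := mul_le_mul_of_nonneg_right hshare (sub_nonneg.mpr hfo.2)
  obtain ⟨h₁, h₂⟩ := weight_image_mem_Icc hσo ho hσ hf c
  constructor
  · rw [le_div_iff₀ hL]
    linarith
  · rw [div_le_iff₀ hL]
    linarith

theorem exists_forall_abs_sub_le_of_weight_image {g : ℕ → A → ℝ} (hL : 0 < L)
    (hσo : ∀ c, ∃ v, σ c = o :: v) (ho : ℓ o = 1) (hσ : ∀ c, weight ℓ (σ c) = L * ℓ c)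
    (hℓ : ∀ c, ℓ c ∈ Set.Icc 1 M) (hg₀ : ∀ c, g 0 c ∈ Set.Icc (lo * ℓ c) (hi * ℓ c))
    (hg : ∀ n c, g (n + 1) c = weight (g n) (σ c) / L) :
    ∃ C, lo ≤ C ∧ ∀ n c, |g n c - C * ℓ c| ≤ (hi - lo) * (1 - 1 / (L * M)) ^ n * ℓ c := by
  set δ := 1 / (L * M)
  let I : ℕ → ℝ × ℝ := Nat.rec (lo, hi) fun n I =>
    (I.1 + δ * (g n o - I.1), I.2 - δ * (I.2 - g n o))
  have hI : ∀ n c, g n c ∈ Set.Icc ((I n).1 * ℓ c) ((I n).2 * ℓ c) := by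
    intro n
    induction n with
    | zero => exact hg₀
    | succ n ih => exact fun c => hg n c ▸ weight_image_div_mem_Icc hL hσo ho hσ hℓ ih c
  have hIo : ∀ n, g n o ∈ Set.Icc (I n).1 (I n).2 := fun n => by simpa [ho] using hI n o
  have hwidth : ∀ n, (I n).2 - (I n).1 = (hi - lo) * (1 - δ) ^ n := by
    intro n
    induction n with
    | zero => simp [I]
    | succ n ih =>
      calc (I (n + 1)).2 - (I (n + 1)).1 = (1 - δ) * ((I n).2 - (I n).1) := by simp only [I]; ring
        _ = (hi - lo) * (1 - δ) ^ (n + 1) := by rw [ih]; ring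
  have hδ₀ : 0 ≤ δ := by
    have := (hℓ o).1.trans (hℓ o).2
    positivity
  have hmono : Monotone fun n => (I n).1 := monotone_nat_of_le_succ fun n =>
    le_add_of_nonneg_right (mul_nonneg hδ₀ (sub_nonneg.mpr (hIo n).1))
  have hanti : Antitone fun n => (I n).2 := antitone_nat_of_succ_le fun n =>
    sub_le_self _ (mul_nonneg hδ₀ (sub_nonneg.mpr (hIo n).2))
  have hC := Set.mem_iInter.mp
    (hmono.ciSup_mem_iInter_Icc_of_antitone hanti fun n => (hIo n).1.trans (hIo n).2)
  refine ⟨_, (hC 0).1, fun n c => ?_⟩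
  have hℓc : 0 ≤ ℓ c := zero_le_one.trans (hℓ c).1
  have h₁ := mul_le_mul_of_nonneg_right (hC n).1 hℓc
  have h₂ := mul_le_mul_of_nonneg_right (hC n).2 hℓc
  rw [← hwidth, sub_mul, abs_sub_le_iff]
  constructor <;> linarith [(hI n c).1, (hI n c).2]

/-- A quantitative Perron–Frobenius theorem for the incidence matrix of `σ`. -/
theorem exists_abs_imageLength_sub_le (hL : 0 < L) (hσo : ∀ c, ∃ v, σ c = o :: v) (ho : ℓ o = 1)
    (hσ : ∀ c, weight ℓ (σ c) = L * ℓ c) (hℓ : ∀ c, ℓ c ∈ Set.Icc 1 M) :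
    ∃ C, 0 < C ∧ ∀ n w, |(imageLength σ n w : ℝ) - C * (L ^ n * weight ℓ w)| ≤
      (1 - 1 / M) * (L - 1 / M) ^ n * weight ℓ w := by
  have hM : 0 < M := one_pos.trans_le ((hℓ o).1.trans (hℓ o).2)
  obtain ⟨C, hC, h⟩ := exists_forall_abs_sub_le_of_weight_image (lo := 1 / M) (hi := 1)
    (g := fun n c => imageLength σ n [c] / L ^ n) hL hσo ho hσ hℓ
    (fun c => by simpa [imageLength, inv_mul_le_one₀ hM] using (hℓ c).symm)
    (fun n c => by
      have hdiv : ∀ c, (imageLength σ n [c] : ℝ) / L ^ n = (L ^ n)⁻¹ * imageLength σ n [c] :=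
        fun c => div_eq_inv_mul _ _
      simp only [hdiv, weight_const_mul, weight_imageLength, imageLength_succ,
        List.flatMap_singleton]
      field_simp
      ring)
  refine ⟨C, (one_div_pos.mpr hM).trans_le hC, fun n w => ?_⟩
  have hpow : (L - 1 / M) ^ n = L ^ n * (1 - 1 / (L * M)) ^ n := by
    rw [← mul_pow, mul_sub, mul_one, mul_one_div, div_mul_cancel_left₀ hL.ne', one_div]
  rw [← weight_imageLength, ← mul_assoc]
  refine abs_weight_sub_le (fun c => ?_) w
  have hLn : 0 < L ^ n := pow_pos hL n
  calc |(imageLength σ n [c] : ℝ) - C * L ^ n * ℓ c|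
      = L ^ n * |imageLength σ n [c] / L ^ n - C * ℓ c| := by
        rw [← abs_of_pos hLn, ← abs_mul, abs_of_pos hLn]
        congr 1
        field_simp
    _ ≤ L ^ n * ((1 - 1 / M) * (1 - 1 / (L * M)) ^ n * ℓ c) :=
        mul_le_mul_of_nonneg_left (h n c) hLn.le
    _ = (1 - 1 / M) * (L - 1 / M) ^ n * ℓ c := by rw [hpow]; ring

end Growth

/-! ### The block structure of the fixed point -/

section Blocks

variable {d : ℕ} {u : ℕ → ℕ} {v w : List ℕ} {i t : ℕ}

theorem phiW_append (d : ℕ) (v w : List ℕ) : phiW d (v ++ w) = phiW d v ++ phiW d w := by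
  simp [phiW]

theorem phiW_singleton (d c : ℕ) : phiW d [c] = phiL d c := by
  simp [phiW]

theorem phiW_cons (d c : ℕ) (w : List ℕ) : phiW d (c :: w) = phiL d c ++ phiW d w := by
  simp [phiW]

theorem phiL_of_lt {c : ℕ} (hc : c < d - 1) : phiL d c = [0, c + 1] := if_pos hc

theorem phiL_of_le {c : ℕ} (hc : d - 1 ≤ c) : phiL d c = [0, d - 1, d - 1] := if_neg hc.not_gt

theorem exists_phiL_eq_zero_cons (d c : ℕ) : ∃ v, phiL d c = 0 :: v := by
  unfold phiL
  split_ifs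
  exacts [⟨_, rfl⟩, ⟨_, rfl⟩]

theorem zero_notMem_of_phiL_eq_zero_cons (hd : 2 ≤ d) {c : ℕ} (h : phiL d c = 0 :: v) : 0 ∉ v := by
  unfold phiL at h
  split_ifs at h <;> simp only [List.cons.injEq, true_and] at h <;> subst h
  · simp
  · simp only [List.mem_cons, List.not_mem_nil, or_false]
    omega

theorem exists_phiW_append_zero_eq_zero_cons (d : ℕ) (w : List ℕ) :
    ∃ v, phiW d w ++ [0] = 0 :: v := by
  cases w with
  | nil => exact ⟨[], rfl⟩
  | cons c w =>
    obtain ⟨v, hv⟩ := exists_phiL_eq_zero_cons d c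
    exact ⟨v ++ phiW d w ++ [0], by simp [phiW_cons, hv]⟩

theorem le_of_mem_phiL {a c : ℕ} (ha : a ∈ phiL d c) : a ≤ d - 1 := by
  unfold phiL at ha
  split_ifs at ha <;> simp only [List.mem_cons, List.not_mem_nil, or_false] at ha <;> omega

theorem le_of_mem_phiW {a : ℕ} (ha : a ∈ phiW d w) : a ≤ d - 1 := by
  obtain ⟨c, -, hc⟩ := List.mem_flatMap.mp ha
  exact le_of_mem_phiL hc

/-- The position in `u` at which the block `φ(u_m)` of the factorization
`u = φ(u_0)φ(u_1)φ(u_2)⋯` starts. -/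
def cutPos (d : ℕ) (u : ℕ → ℕ) (m : ℕ) : ℕ := (phiW d (seqPrefix u m)).length

theorem cutPos_succ (d : ℕ) (u : ℕ → ℕ) (m : ℕ) :
    cutPos d u (m + 1) = cutPos d u m + (phiL d (u m)).length := by
  simp [cutPos, seqPrefix_succ, phiW_append, phiW_singleton]

theorem IsPhiFixed.phiW_seqPrefix (hu : IsPhiFixed d u) (m : ℕ) :
    phiW d (seqPrefix u m) = seqPrefix u (cutPos d u m) := by
  simpa [OccursAt, cutPos, seqPrefix] using hu.2 m

theorem cutPos_add_length (h : OccursAt w u i) :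
    cutPos d u (i + w.length) = cutPos d u i + (phiW d w).length := by
  rw [cutPos, ← occursAt_iff_seqPrefix_append.mp h, phiW_append, List.length_append, cutPos]

theorem IsPhiFixed.occursAt_phiW (hu : IsPhiFixed d u) (h : OccursAt w u i) :
    OccursAt (phiW d w) u (cutPos d u i) := by
  rw [occursAt_iff_seqPrefix_append, ← cutPos_add_length h, ← hu.phiW_seqPrefix,
    ← hu.phiW_seqPrefix, ← phiW_append, occursAt_iff_seqPrefix_append.mp h]

theorem IsPhiFixed.occursAt_phiL (hu : IsPhiFixed d u) (m : ℕ) :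
    OccursAt (phiL d (u m)) u (cutPos d u m) := by
  simpa only [phiW_singleton] using hu.occursAt_phiW (occursAt_singleton.mpr (rfl : u m = u m))

theorem IsPhiFixed.apply_cutPos (hu : IsPhiFixed d u) (m : ℕ) :
    u (cutPos d u m) = 0 := by
  obtain ⟨v, hv⟩ := exists_phiL_eq_zero_cons d (u m)
  exact (occursAt_cons.mp (hv ▸ hu.occursAt_phiL m)).1

theorem IsPhiFixed.apply_cutPos_add_one (hu : IsPhiFixed d u) (m : ℕ) :
    u (cutPos d u m + 1) = min (u m + 1) (d - 1) := by
  have h := hu.occursAt_phiL m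
  rcases lt_or_ge (u m) (d - 1) with hm | hm
  · simp only [phiL_of_lt hm, occursAt_cons] at h
    omega
  · simp only [phiL_of_le hm, occursAt_cons] at h
    omega

theorem IsPhiFixed.occursAt_phiW_append_zero (hu : IsPhiFixed d u)
    (h : OccursAt w u i) : OccursAt (phiW d w ++ [0]) u (cutPos d u i) := by
  rw [occursAt_append, occursAt_singleton, ← cutPos_add_length h]
  exact ⟨hu.occursAt_phiW h, hu.apply_cutPos _⟩

theorem le_cutPos (d : ℕ) (u : ℕ → ℕ) (m : ℕ) : m ≤ cutPos d u m := by
  induction m with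
  | zero => exact Nat.zero_le _
  | succ m ih =>
    obtain ⟨v, hv⟩ := exists_phiL_eq_zero_cons d (u m)
    rw [cutPos_succ, hv, List.length_cons]
    omega

theorem exists_cutPos_le_lt (d : ℕ) (u : ℕ → ℕ) (t : ℕ) :
    ∃ m, ∃ s < (phiL d (u m)).length, t = cutPos d u m + s := by
  classical
  have hex : ∃ m, t < cutPos d u m := ⟨t + 1, le_cutPos d u (t + 1)⟩
  obtain ⟨m, hlt, hmin⟩ : ∃ m, t < cutPos d u m ∧ ∀ k < m, ¬ t < cutPos d u k :=
    ⟨Nat.find hex, Nat.find_spec hex, fun _ => Nat.find_min hex⟩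
  cases m with
  | zero => exact absurd hlt (Nat.not_lt_zero t)
  | succ m =>
    have hle := hmin m m.lt_succ_self
    rw [cutPos_succ] at hlt
    exact ⟨m, t - cutPos d u m, by omega, by omega⟩

theorem IsPhiFixed.apply_le (hu : IsPhiFixed d u) (t : ℕ) : u t ≤ d - 1 := by
  obtain ⟨m, s, hs, rfl⟩ := exists_cutPos_le_lt d u t
  exact le_of_mem_phiL ((hu.occursAt_phiL m).apply_mem hs)

theorem IsPhiFixed.exists_eq_cutPos_of_apply_eq_zero (hu : IsPhiFixed d u) (hd : 2 ≤ d)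
    (ht : u t = 0) : ∃ m, t = cutPos d u m := by
  obtain ⟨m, s, hs, rfl⟩ := exists_cutPos_le_lt d u t
  obtain ⟨v, hv⟩ := exists_phiL_eq_zero_cons d (u m)
  have hocc := hu.occursAt_phiL m
  rw [hv] at hs hocc
  cases s with
  | zero => exact ⟨m, rfl⟩
  | succ s =>
    have hmem := (occursAt_cons.mp hocc).2.apply_mem (Nat.lt_of_succ_lt_succ hs)
    rw [Nat.add_assoc, Nat.add_comm 1 s, ht] at hmem
    exact absurd hmem (zero_notMem_of_phiL_eq_zero_cons hd hv)

theorem eq_of_occursAt_phiL_append_zero {a b : ℕ} (ha : a ≤ d - 1) (hb : b ≤ d - 1)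
    (hoa : OccursAt (phiL d a ++ [0]) u t) (hob : OccursAt (phiL d b ++ [0]) u t) : a = b := by
  unfold phiL at hoa hob
  split_ifs at hoa hob <;>
    simp only [List.cons_append, List.nil_append, occursAt_cons] at hoa hob <;> omega

theorem IsPhiFixed.occursAt_of_occursAt_phiW_append_zero (hu : IsPhiFixed d u)
    (hw : ∀ c ∈ w, c ≤ d - 1) (h : OccursAt (phiW d w ++ [0]) u (cutPos d u i)) :
    OccursAt w u i := by
  induction w generalizing i with
  | nil => exact occursAt_nil u i
  | cons c w ih =>
    rw [phiW_cons, List.append_assoc] at h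
    have hc : u i = c := by
      obtain ⟨v, hv⟩ := exists_phiW_append_zero_eq_zero_cons d w
      rw [hv, ← List.singleton_append, ← List.append_assoc] at h
      have hui := hu.occursAt_phiW_append_zero (occursAt_singleton.mpr (rfl : u i = u i))
      rw [phiW_singleton] at hui
      exact eq_of_occursAt_phiL_append_zero (hu.apply_le i) (hw c List.mem_cons_self) hui
        (occursAt_append.mp h).1
    have hrest := (occursAt_append.mp h).2
    rw [← hc, ← cutPos_succ] at hrest
    exact occursAt_cons.mpr ⟨hc, ih (fun a ha => hw a (List.mem_cons_of_mem c ha)) hrest⟩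

end Blocks

/-! ### The middle words of the iterated triplets -/

section Triplets

variable {d : ℕ} {u : ℕ → ℕ} {T : ℕ × List ℕ × ℕ} {a b i j n s t t' α β : ℕ}

/-- The word that `fmap` inserts next to `φ(w)0` on behalf of an outer letter `c` of a triplet. -/
def spacer (d c : ℕ) : List ℕ := if c = d - 2 then [d - 1] else []

theorem fmap_eq (d : ℕ) (T : ℕ × List ℕ × ℕ) :
    fmap d T = ((T.1 + 1) % (d - 1), spacer d T.1 ++ phiW d T.2.1 ++ [0] ++ spacer d T.2.2,
      (T.2.2 + 1) % (d - 1)) := rfl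

/-- The triplets over the alphabet `{0, …, d - 1}` with outer letters less than `d - 1`. -/
def alphabetTriplets (d : ℕ) : Set (ℕ × List ℕ × ℕ) :=
  {T | T.1 < d - 1 ∧ (∀ c ∈ T.2.1, c ≤ d - 1) ∧ T.2.2 < d - 1}

theorem le_of_mem_spacer (ha : a ∈ spacer d b) : a ≤ d - 1 := by
  unfold spacer at ha
  split_ifs at ha <;> simp_all

theorem fmap_mem_alphabetTriplets (hd : 2 ≤ d) (T : ℕ × List ℕ × ℕ) :
    fmap d T ∈ alphabetTriplets d := by
  refine ⟨Nat.mod_lt _ (by omega), fun c hc => ?_, Nat.mod_lt _ (by omega)⟩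
  simp only [fmap_eq, List.mem_append, List.mem_singleton] at hc
  rcases hc with ((hc | hc) | rfl) | hc
  · exact le_of_mem_spacer hc
  · exact le_of_mem_phiW hc
  · exact Nat.zero_le _
  · exact le_of_mem_spacer hc

theorem Tinit_mem_alphabetTriplets (hd : 2 ≤ d) (hj : j ≤ d - 1) :
    Tinit d j ∈ alphabetTriplets d := by
  have h0 : 0 < d - 1 := by omega
  unfold Tinit
  split_ifs with h
  · exact ⟨h0, by simp, h0⟩
  · exact ⟨h0, by simp, lt_of_le_of_ne hj h⟩

/-- The word `x` such that `u_0⋯u_{t-1} x` is the `φⁿ`-image of a prefix of `u` whenever the middle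
word of `fⁿ(T)` occurs in `u` at position `t`. -/
def overhang (d : ℕ) : ℕ × List ℕ × ℕ → ℕ → List ℕ
  | _, 0 => []
  | T, n + 1 => overhang d (fmap d T) n ++ (phiW d)^[n] (spacer d T.1)

theorem iterate_phiW_append (d n : ℕ) (v w : List ℕ) :
    (phiW d)^[n] (v ++ w) = (phiW d)^[n] v ++ (phiW d)^[n] w :=
  iterate_flatMap_append (phiL d) n v w

theorem append_overhang_succ {x y z : List ℕ} (hx : x ++ overhang d (fmap d T) n = (phiW d)^[n] y)
    (hy : y ++ spacer d T.1 = phiW d z) : x ++ overhang d T (n + 1) = (phiW d)^[n + 1] z := by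
  rw [overhang, ← List.append_assoc, hx, ← iterate_phiW_append, hy, Function.iterate_succ_apply]

theorem IsPhiFixed.exists_occursAt_of_occursAt_fmap (hu : IsPhiFixed d u) (hd : 2 ≤ d)
    (hT : T ∈ alphabetTriplets d) (ht : OccursAt (fmap d T).2.1 u t) :
    ∃ i, OccursAt T.2.1 u i ∧ seqPrefix u t ++ spacer d T.1 = phiW d (seqPrefix u i) ∧
      ((T.2.2 + 1 < d - 1 → T.2.2 + 1 ≤ u (t + (fmap d T).2.1.length)) →
        T.2.2 ≤ u (i + T.2.1.length)) := by
  obtain ⟨α, v, β⟩ := T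
  obtain ⟨-, hv, hβ⟩ := hT
  simp only [fmap_eq] at ht hv hβ ⊢
  rw [List.append_assoc (spacer d α), occursAt_append, occursAt_append] at ht
  obtain ⟨⟨hα, hv0⟩, hsβ⟩ := ht
  obtain ⟨i, hi⟩ : ∃ i, t + (spacer d α).length = cutPos d u i := by
    obtain ⟨z, hz⟩ := exists_phiW_append_zero_eq_zero_cons d v
    exact hu.exists_eq_cutPos_of_apply_eq_zero hd (occursAt_cons.mp (hz ▸ hv0)).1
  have hvi := hu.occursAt_of_occursAt_phiW_append_zero hv (hi ▸ hv0)
  refine ⟨i, hvi, ?_, fun hnext => ?_⟩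
  · rw [occursAt_iff_seqPrefix_append.mp hα, hi, hu.phiW_seqPrefix]
  have hend : t + (spacer d α ++ (phiW d v ++ [0])).length = cutPos d u (i + v.length) + 1 := by
    rw [cutPos_add_length hvi, ← hi]
    simp only [List.length_append, List.length_singleton]
    omega
  have hmin := hu.apply_cutPos_add_one (i + v.length)
  rw [hend] at hsβ
  by_cases hβd : β = d - 2
  · rw [spacer, if_pos hβd, occursAt_singleton, hmin] at hsβ
    omega
  · rw [show spacer d β = [] from if_neg hβd, List.append_nil, List.append_assoc, hend,
      hmin] at hnext
    omega

theorem IsPhiFixed.exists_occursAt_of_occursAt_iterate_fmap (hu : IsPhiFixed d u) (hd : 2 ≤ d)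
    (hT : T ∈ alphabetTriplets d) (ht : OccursAt ((fmap d)^[n] T).2.1 u t) :
    ∃ i, OccursAt T.2.1 u i ∧ seqPrefix u t ++ overhang d T n = (phiW d)^[n] (seqPrefix u i) ∧
      (d - 1 ≤ T.2.2 + n → T.2.2 ≤ u (i + T.2.1.length)) := by
  induction n generalizing T with
  | zero => exact ⟨t, ht, List.append_nil _, fun h => absurd h (by have := hT.2.2; omega)⟩
  | succ n ih =>
    obtain ⟨m, hm, hpre, hnext⟩ := ih (fmap_mem_alphabetTriplets hd T) ht
    obtain ⟨i, hi, hpre', hnext'⟩ := hu.exists_occursAt_of_occursAt_fmap hd hT hm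
    refine ⟨i, hi, append_overhang_succ hpre hpre', fun hn => hnext' fun hβ => ?_⟩
    have hfβ : (fmap d T).2.2 = T.2.2 + 1 := Nat.mod_eq_of_lt hβ
    rw [hfβ] at hnext
    exact hnext (by omega)

theorem imageLength_phiL_mono (d n : ℕ) {c c' : ℕ} (h : c ≤ c') :
    imageLength (phiL d) n [c] ≤ imageLength (phiL d) n [c'] := by
  induction n generalizing c c' with
  | zero => exact le_rfl
  | succ n ih =>
    simp only [imageLength_succ, List.flatMap_singleton]
    rcases lt_or_ge c' (d - 1) with hc' | hc'
    · rw [phiL_of_lt hc', phiL_of_lt (h.trans_lt hc'), imageLength_cons,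
        imageLength_cons _ _ _ [c' + 1]]
      exact Nat.add_le_add_left (ih (Nat.succ_le_succ h)) _
    · rcases lt_or_ge c (d - 1) with hc | hc
      · rw [phiL_of_le hc', phiL_of_lt hc]
        calc imageLength (phiL d) n [0, c + 1]
            ≤ imageLength (phiL d) n [0] + imageLength (phiL d) n [d - 1] := by
              rw [imageLength_cons]
              exact Nat.add_le_add_left (ih hc) _
          _ = imageLength (phiL d) n [0, d - 1] := (imageLength_cons _ _ _ _).symm
          _ ≤ imageLength (phiL d) n ([0, d - 1] ++ [d - 1]) := by
              rw [imageLength_append]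
              exact Nat.le_add_right _ _
      · rw [phiL_of_le hc', phiL_of_le hc]

theorem imageLength_phiL_pos (d n : ℕ) {w : List ℕ} (hw : w ≠ []) :
    0 < imageLength (phiL d) n w := by
  refine imageLength_pos (fun c h => ?_) n hw
  obtain ⟨v, hv⟩ := exists_phiL_eq_zero_cons d c
  simp [hv] at h

theorem length_iterate_phiW (d n : ℕ) (w : List ℕ) :
    ((phiW d)^[n] w).length = imageLength (phiL d) n w := rfl

theorem le_apply_of_occursAt_Tinit (hi : OccursAt (Tinit d j).2.1 u i)
    (hnext : (Tinit d j).2.2 ≤ u (i + (Tinit d j).2.1.length)) : j ≤ u i := by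
  unfold Tinit at hi hnext
  split_ifs at hi hnext with h
  · exact h.trans_le (occursAt_singleton.mp hi).ge
  · exact hnext

theorem IsPhiFixed.add_imageLength_le (hu : IsPhiFixed d u) (hd : 2 ≤ d) (hj : j ≤ d - 1)
    (hn : d - 1 ≤ n) (ht : OccursAt ((fmap d)^[n] (Tinit d j)).2.1 u t)
    (ht' : OccursAt ((fmap d)^[n] (Tinit d j)).2.1 u t') (htt' : t < t') :
    t + imageLength (phiL d) n [j] ≤ t' := by
  have hT := Tinit_mem_alphabetTriplets hd hj
  obtain ⟨i, hi, hpre, hnext⟩ := hu.exists_occursAt_of_occursAt_iterate_fmap hd hT ht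
  obtain ⟨i', -, hpre', -⟩ := hu.exists_occursAt_of_occursAt_iterate_fmap hd hT ht'
  replace hpre := congrArg List.length hpre
  replace hpre' := congrArg List.length hpre'
  rw [List.length_append, length_seqPrefix, length_iterate_phiW] at hpre hpre'
  have hji : j ≤ u i := le_apply_of_occursAt_Tinit hi (hnext (by omega))
  have hmono := monotone_imageLength_seqPrefix (phiL d) n u
  have hii' : i < i' := by
    by_contra! hle
    have := hmono hle
    dsimp only at this
    omega
  have hstep := hmono (Nat.succ_le_of_lt hii')
  simp only [Nat.succ_eq_add_one, seqPrefix_succ, imageLength_append] at hstep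
  have := imageLength_phiL_mono d n hji
  omega

theorem exists_phiL_eq_append_spacer (hα : α < d - 1) (ha : a = α ∨ a = d - 1) :
    ∃ p a', (a' = (α + 1) % (d - 1) ∨ a' = d - 1) ∧ phiL d a = p ++ a' :: spacer d α := by
  by_cases hαd : α = d - 2
  · rw [spacer, if_pos hαd, show α + 1 = d - 1 by omega, Nat.mod_self]
    rcases ha with rfl | rfl
    · exact ⟨[], 0, Or.inl rfl, by rw [phiL_of_lt hα, show a + 1 = d - 1 by omega]; rfl⟩
    · exact ⟨[0], d - 1, Or.inr rfl, phiL_of_le le_rfl⟩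
  · rw [spacer, if_neg hαd, Nat.mod_eq_of_lt (by omega)]
    rcases ha with rfl | rfl
    · exact ⟨[0], a + 1, Or.inl rfl, phiL_of_lt hα⟩
    · exact ⟨[0, d - 1], d - 1, Or.inr rfl, phiL_of_le le_rfl⟩

theorem exists_phiL_append_zero_eq_spacer_append (hβ : β < d - 1) (hb : b = β ∨ b = d - 1) :
    ∃ b' q, (b' = (β + 1) % (d - 1) ∨ b' = d - 1) ∧
      phiL d b ++ [0] = 0 :: (spacer d β ++ b' :: q) := by
  by_cases hβd : β = d - 2
  · rw [spacer, if_pos hβd, show β + 1 = d - 1 by omega, Nat.mod_self]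
    rcases hb with rfl | rfl
    · exact ⟨0, [], Or.inl rfl, by rw [phiL_of_lt hβ, show b + 1 = d - 1 by omega]; rfl⟩
    · exact ⟨d - 1, [0], Or.inr rfl, by rw [phiL_of_le le_rfl]; rfl⟩
  · rw [spacer, if_neg hβd, Nat.mod_eq_of_lt (by omega)]
    rcases hb with rfl | rfl
    · exact ⟨b + 1, [0], Or.inl rfl, by rw [phiL_of_lt hβ]; rfl⟩
    · exact ⟨d - 1, [d - 1, 0], Or.inr rfl, by rw [phiL_of_le le_rfl]; rfl⟩

/-- The middle word `w` of `T = (α, w, β)` occurs in `u` at position `i + 1`, preceded by `α` or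
`d - 1` and followed by `β` or `d - 1`. Unlike occurrences of `w` alone, such occurrences are
carried over from `T` to `f(T)`. -/
def OccursExtended (d : ℕ) (u : ℕ → ℕ) (T : ℕ × List ℕ × ℕ) (i : ℕ) : Prop :=
  ∃ a b, (a = T.1 ∨ a = d - 1) ∧ (b = T.2.2 ∨ b = d - 1) ∧ OccursAt (a :: (T.2.1 ++ [b])) u i

theorem IsPhiFixed.exists_occursExtended_fmap (hu : IsPhiFixed d u)
    (hT : T ∈ alphabetTriplets d) (h : OccursExtended d u T i) :
    ∃ t, OccursExtended d u (fmap d T) t ∧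
      seqPrefix u (t + 1) ++ spacer d T.1 = phiW d (seqPrefix u (i + 1)) := by
  obtain ⟨a, b, ha, hb, hocc⟩ := h
  obtain ⟨p, a', ha', hpa⟩ := exists_phiL_eq_append_spacer hT.1 ha
  obtain ⟨b', q, hb', hbq⟩ := exists_phiL_append_zero_eq_spacer_append hT.2.2 hb
  have himage : phiW d (a :: (T.2.1 ++ [b])) ++ [0] =
      p ++ (a' :: ((fmap d T).2.1 ++ [b']) ++ q) := by
    rw [phiW_cons, phiW_append, phiW_singleton, List.append_assoc, List.append_assoc, hbq, hpa]
    simp [fmap_eq]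
  have hocc' := hu.occursAt_phiW_append_zero hocc
  rw [himage, occursAt_append, occursAt_append] at hocc'
  refine ⟨_, ⟨a', b', ha', hb', hocc'.2.1⟩, ?_⟩
  have hua : u i = a := (occursAt_cons.mp hocc).1
  have hblock := hu.occursAt_phiL i
  rw [hua, hpa, ← List.singleton_append, occursAt_append, occursAt_append,
    List.length_singleton] at hblock
  rw [occursAt_iff_seqPrefix_append.mp hblock.2.2, hu.phiW_seqPrefix, cutPos_succ, hua, hpa]
  simp only [List.length_append, List.length_cons]
  congr 1
  omega

theorem IsPhiFixed.exists_occursAt_iterate_fmap (hu : IsPhiFixed d u) (hd : 2 ≤ d) (n : ℕ)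
    (hT : T ∈ alphabetTriplets d) (h : OccursExtended d u T i) :
    ∃ t, OccursAt ((fmap d)^[n] T).2.1 u t ∧
      seqPrefix u t ++ overhang d T n = (phiW d)^[n] (seqPrefix u (i + 1)) := by
  induction n generalizing T i with
  | zero =>
    obtain ⟨a, b, -, -, hocc⟩ := h
    exact ⟨i + 1, (occursAt_append.mp (occursAt_cons.mp hocc).2).1, List.append_nil _⟩
  | succ n ih =>
    obtain ⟨s, hs, hpre⟩ := hu.exists_occursExtended_fmap hT h
    obtain ⟨t, ht, hpre'⟩ := ih (fmap_mem_alphabetTriplets hd T) hs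
    exact ⟨t, ht, append_overhang_succ hpre' hpre⟩

theorem IsPhiFixed.exists_occursAt_add_imageLength (hu : IsPhiFixed d u) (hd : 2 ≤ d) (n : ℕ)
    (hT : T ∈ alphabetTriplets d) (h : OccursExtended d u T i)
    (h' : OccursExtended d u T (i + 1)) :
    ∃ t, OccursAt ((fmap d)^[n] T).2.1 u t ∧
      OccursAt ((fmap d)^[n] T).2.1 u (t + imageLength (phiL d) n [u (i + 1)]) := by
  obtain ⟨t, ht, hpre⟩ := hu.exists_occursAt_iterate_fmap hd n hT h
  obtain ⟨t', ht', hpre'⟩ := hu.exists_occursAt_iterate_fmap hd n hT h'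
  refine ⟨t, ht, ?_⟩
  replace hpre := congrArg List.length hpre
  replace hpre' := congrArg List.length hpre'
  simp only [List.length_append, length_seqPrefix, length_iterate_phiW,
    seqPrefix_succ u (i + 1), imageLength_append] at hpre hpre'
  convert ht' using 1
  omega

theorem IsPhiFixed.isFactorS_phiW (hu : IsPhiFixed d u) {w : List ℕ} (hw : IsFactorS w u) :
    IsFactorS (phiW d w) u :=
  let ⟨_, hi⟩ := hw; ⟨_, hu.occursAt_phiW hi⟩

theorem IsPhiFixed.isFactorS_singleton (hu : IsPhiFixed d u) {c : ℕ} (hc : c ≤ d - 1) :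
    IsFactorS [c] u := by
  induction c with
  | zero => exact ⟨0, occursAt_singleton.mpr hu.1⟩
  | succ c ih =>
    have himage := hu.isFactorS_phiW (ih (by omega))
    rw [phiW_singleton, phiL_of_lt hc] at himage
    exact himage.of_infix ⟨[0], [], rfl⟩

theorem IsPhiFixed.exists_occursAt_zero_last_last_zero_last (hu : IsPhiFixed d u) :
    ∃ i, OccursAt [0, d - 1, d - 1, 0, d - 1] u i := by
  have hφ : phiL d (d - 1) = [0, d - 1, d - 1] := phiL_of_le le_rfl
  have hsquare : IsFactorS [d - 1, d - 1] u := by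
    have himage := hu.isFactorS_phiW (hu.isFactorS_singleton (le_refl (d - 1)))
    rw [phiW_singleton, hφ] at himage
    exact himage.of_infix ⟨[0], [], rfl⟩
  have himage := hu.isFactorS_phiW hsquare
  rw [phiW_cons, phiW_singleton, hφ] at himage
  exact himage.of_infix ⟨[], [d - 1], rfl⟩

theorem IsPhiFixed.exists_occursExtended_Tinit (hu : IsPhiFixed d u) (hd : 2 ≤ d)
    (hj : j = 0 ∨ j = d - 1) :
    ∃ i, OccursExtended d u (Tinit d j) i ∧ OccursExtended d u (Tinit d j) (i + 1) ∧
      u (i + 1) = j := by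
  obtain ⟨i, hi⟩ := hu.exists_occursAt_zero_last_last_zero_last
  simp only [occursAt_cons, occursAt_nil, and_true, Nat.add_assoc, Nat.reduceAdd] at hi
  obtain ⟨h₀, h₁, h₂, h₃, h₄⟩ := hi
  rcases hj with rfl | rfl
  · have hT : Tinit d 0 = (0, [], 0) := if_neg (by omega)
    refine ⟨i + 2, ⟨d - 1, 0, ?_⟩, ⟨0, d - 1, ?_⟩, h₃⟩ <;>
      simp [hT, occursAt_cons, occursAt_nil, Nat.add_assoc, h₂, h₃, h₄]
  · have hT : Tinit d (d - 1) = (0, [d - 1], 0) := if_pos rfl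
    refine ⟨i, ⟨0, d - 1, ?_⟩, ⟨d - 1, 0, ?_⟩, h₁⟩ <;>
      simp [hT, occursAt_cons, occursAt_nil, Nat.add_assoc, h₀, h₁, h₂, h₃]

theorem ReturnWord.exists_add_length {w r : List ℕ} (hr : ReturnWord u w r) :
    ∃ t, 0 < r.length ∧ OccursAt w u t ∧ OccursAt w u (t + r.length) := by
  obtain ⟨t, t', htt', ht, ht', -, rfl⟩ := hr
  refine ⟨t, ?_, ht, ?_⟩
  · simpa using htt'
  · simpa [Nat.add_sub_cancel' htt'.le] using ht'

theorem exists_returnWord_length_le {w : List ℕ} (hs : 0 < s) (ht : OccursAt w u t)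
    (hts : OccursAt w u (t + s)) : ∃ r, ReturnWord u w r ∧ r.length ≤ s := by
  classical
  have hex : ∃ k, 0 < k ∧ OccursAt w u (t + k) := ⟨s, hs, hts⟩
  obtain ⟨hpos, hocc⟩ := Nat.find_spec hex
  refine ⟨_, ⟨t, t + Nat.find hex, by omega, ht, hocc, fun m htm hm hwm => ?_, rfl⟩, ?_⟩
  · refine Nat.find_min hex (m := m - t) (by omega) ⟨by omega, ?_⟩
    rwa [Nat.add_sub_cancel' htm.le]
  · simpa using Nat.find_min' hex ⟨hs, hts⟩

theorem IsPhiFixed.imageLength_le_length_returnWord (hu : IsPhiFixed d u) (hd : 2 ≤ d)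
    (hj : j ≤ d - 1) (hn : d - 1 ≤ n) {r : List ℕ}
    (hr : ReturnWord u ((fmap d)^[n] (Tinit d j)).2.1 r) :
    imageLength (phiL d) n [j] ≤ r.length := by
  obtain ⟨t, hpos, ht, ht'⟩ := hr.exists_add_length
  exact Nat.le_of_add_le_add_left (hu.add_imageLength_le hd hj hn ht ht' (by omega))

theorem IsPhiFixed.exists_returnWord_length_le_imageLength (hu : IsPhiFixed d u) (hd : 2 ≤ d)
    (hj : j = 0 ∨ j = d - 1) (n : ℕ) :
    ∃ r, ReturnWord u ((fmap d)^[n] (Tinit d j)).2.1 r ∧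
      r.length ≤ imageLength (phiL d) n [j] := by
  obtain ⟨i, hi, hi', rfl⟩ := hu.exists_occursExtended_Tinit hd hj
  obtain ⟨t, ht, ht'⟩ := hu.exists_occursAt_add_imageLength hd n
    (Tinit_mem_alphabetTriplets hd (hu.apply_le _)) hi hi'
  exact exists_returnWord_length_le (imageLength_phiL_pos d n (List.cons_ne_nil _ _)) ht ht'

end Triplets

/-! ### Weights and limits -/

section Weights

variable {d : ℕ} {L C K : ℝ} {T : ℕ × List ℕ × ℕ}

/-- The left eigenvector, for the eigenvalue `L`, of the incidence matrix of `φ_d`, normalized to be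
`1` at the letter `0`. Letters above `d - 1` are treated like `d - 1`, as in `phiL`. -/
noncomputable def letterWeight (d : ℕ) (L : ℝ) (c : ℕ) : ℝ :=
  ((L - 2) * L ^ min c (d - 1) + 1) / (L - 1)

theorem letterWeight_zero (d : ℕ) (hL : 2 < L) : letterWeight d L 0 = 1 := by
  rw [letterWeight, Nat.zero_min, pow_zero, div_eq_one_iff_eq (by linarith)]
  ring

theorem letterWeight_of_le (hL : 2 < L) (h : L ^ (d - 1) * (L - 2) ^ 2 = 1) {c : ℕ}
    (hc : d - 1 ≤ c) : letterWeight d L c = 1 / (L - 2) := by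
  rw [letterWeight, min_eq_right hc, div_eq_div_iff (by linarith) (by linarith)]
  linarith

theorem letterWeight_mem_Icc (hL : 2 < L) (h : L ^ (d - 1) * (L - 2) ^ 2 = 1) (c : ℕ) :
    letterWeight d L c ∈ Set.Icc 1 (1 / (L - 2)) := by
  have hmono : Monotone (letterWeight d L) := by
    intro a b hab
    unfold letterWeight
    have : 0 < L - 2 := by linarith
    gcongr <;> linarith
  constructor
  · rw [← letterWeight_zero d hL]
    exact hmono c.zero_le
  · rw [← letterWeight_of_le hL h (le_max_right c (d - 1))]
    exact hmono (le_max_left c (d - 1))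

theorem weight_phiL (hL : 2 < L) (h : L ^ (d - 1) * (L - 2) ^ 2 = 1) (c : ℕ) :
    weight (letterWeight d L) (phiL d c) = L * letterWeight d L c := by
  rcases lt_or_ge c (d - 1) with hc | hc
  · rw [phiL_of_lt hc, weight_cons, letterWeight_zero d hL, weight_cons, weight_nil, letterWeight,
      letterWeight, min_eq_left hc.le, min_eq_left (show c + 1 ≤ d - 1 from hc)]
    field_simp [show L - 1 ≠ 0 by linarith]
    ring
  · rw [phiL_of_le hc, weight_cons, letterWeight_zero d hL, weight_cons, weight_cons, weight_nil,
      letterWeight_of_le hL h le_rfl, letterWeight_of_le hL h hc]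
    field_simp [show L - 2 ≠ 0 by linarith]
    ring

theorem exists_abs_imageLength_phiL_sub_le (hL : 2 < L)
    (h : L ^ (d - 1) * (L - 2) ^ 2 = 1) :
    ∃ C, 0 < C ∧ ∀ n w, |(imageLength (phiL d) n w : ℝ) -
      C * (L ^ n * weight (letterWeight d L) w)| ≤
        (3 - L) * 2 ^ n * weight (letterWeight d L) w := by
  obtain ⟨C, hC, hbound⟩ := exists_abs_imageLength_sub_le (by linarith)
    (exists_phiL_eq_zero_cons d)
    (letterWeight_zero d hL) (weight_phiL hL h) (letterWeight_mem_Icc hL h)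
  rw [one_div_one_div, sub_sub_cancel, show 1 - (L - 2) = 3 - L by ring] at hbound
  exact ⟨C, hC, hbound⟩

/-- The contribution of an outer letter `α` of a triplet to `tripletWeight`: it accounts for the
spacers that the iterates of `fmap` insert on its side. -/
noncomputable def edgeWeight (d : ℕ) (L : ℝ) (α : ℕ) : ℝ :=
  L ^ α / ((L ^ (d - 1) - 1) * (L - 2))

theorem one_lt_pow_of_mul_sq_eq_one (hL₁ : 2 < L) (hL₂ : L < 3)
    (h : L ^ (d - 1) * (L - 2) ^ 2 = 1) : 1 < L ^ (d - 1) := by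
  nlinarith

theorem edgeWeight_mod_add_weight_spacer (hL₁ : 2 < L) (hL₂ : L < 3)
    (h : L ^ (d - 1) * (L - 2) ^ 2 = 1) {α : ℕ} (hα : α < d - 1) :
    edgeWeight d L ((α + 1) % (d - 1)) + weight (letterWeight d L) (spacer d α) =
      L * edgeWeight d L α := by
  have hpow := one_lt_pow_of_mul_sq_eq_one hL₁ hL₂ h
  by_cases hαd : α = d - 2
  · have hα' : α + 1 = d - 1 := by omega
    rw [spacer, if_pos hαd, weight_cons, weight_nil, letterWeight_of_le hL₁ h le_rfl, edgeWeight,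
      edgeWeight, hα', Nat.mod_self, mul_div_assoc', ← pow_succ', hα']
    field_simp [show L - 2 ≠ 0 by linarith, show L ^ (d - 1) - 1 ≠ 0 by linarith]
    ring
  · rw [spacer, if_neg hαd, weight_nil, edgeWeight, edgeWeight, Nat.mod_eq_of_lt (by omega)]
    ring

/-- The limit of `weight (w_n) / Lⁿ`, where `w_n` is the middle word of `fⁿ(T)`. -/
noncomputable def tripletWeight (d : ℕ) (L : ℝ) (T : ℕ × List ℕ × ℕ) : ℝ :=
  weight (letterWeight d L) T.2.1 + (edgeWeight d L T.1 + edgeWeight d L T.2.2 + 1 / (L - 1))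

theorem tripletWeight_fmap (hL₁ : 2 < L) (hL₂ : L < 3) (h : L ^ (d - 1) * (L - 2) ^ 2 = 1)
    (hT : T ∈ alphabetTriplets d) : tripletWeight d L (fmap d T) = L * tripletWeight d L T := by
  have hleft := edgeWeight_mod_add_weight_spacer hL₁ hL₂ h hT.1
  have hright := edgeWeight_mod_add_weight_spacer hL₁ hL₂ h hT.2.2
  have hgeom : 1 + 1 / (L - 1) = L * (1 / (L - 1)) := by
    field_simp [show L - 1 ≠ 0 by linarith]
    ring
  have hφ : weight (letterWeight d L) (phiW d T.2.1) = L * weight (letterWeight d L) T.2.1 :=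
    weight_flatMap (weight_phiL hL₁ h) _
  simp only [tripletWeight, fmap_eq, weight_append, weight_cons, weight_nil,
    letterWeight_zero d hL₁, hφ]
  linarith

theorem tripletWeight_iterate_fmap (hd : 2 ≤ d) (hL₁ : 2 < L) (hL₂ : L < 3)
    (h : L ^ (d - 1) * (L - 2) ^ 2 = 1) (hT : T ∈ alphabetTriplets d) (n : ℕ) :
    tripletWeight d L ((fmap d)^[n] T) = L ^ n * tripletWeight d L T := by
  induction n generalizing T with
  | zero => simp
  | succ n ih =>
    rw [Function.iterate_succ_apply, ih (fmap_mem_alphabetTriplets hd T),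
      tripletWeight_fmap hL₁ hL₂ h hT, pow_succ, mul_assoc]

theorem iterate_fmap_mem_alphabetTriplets (hd : 2 ≤ d) (hT : T ∈ alphabetTriplets d) (n : ℕ) :
    (fmap d)^[n] T ∈ alphabetTriplets d := by
  cases n with
  | zero => exact hT
  | succ n => rw [Function.iterate_succ_apply']; exact fmap_mem_alphabetTriplets hd _

theorem edgeWeight_mem_Icc (hL₁ : 2 < L) (hL₂ : L < 3) (h : L ^ (d - 1) * (L - 2) ^ 2 = 1)
    {α : ℕ} (hα : α < d - 1) : edgeWeight d L α ∈ Set.Icc 0 (edgeWeight d L (d - 1)) := by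
  have hpow := one_lt_pow_of_mul_sq_eq_one hL₁ hL₂ h
  have hden : 0 < (L ^ (d - 1) - 1) * (L - 2) := mul_pos (by linarith) (by linarith)
  unfold edgeWeight
  constructor
  · exact div_nonneg (pow_nonneg (by linarith) α) hden.le
  · exact div_le_div_of_nonneg_right (pow_le_pow_right₀ (by linarith) hα.le) hden.le

theorem tripletWeight_sub_weight_mem_Icc (hL₁ : 2 < L) (hL₂ : L < 3)
    (h : L ^ (d - 1) * (L - 2) ^ 2 = 1) (hT : T ∈ alphabetTriplets d) :
    tripletWeight d L T - weight (letterWeight d L) T.2.1 ∈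
      Set.Icc 0 (2 * edgeWeight d L (d - 1) + 1 / (L - 1)) := by
  obtain ⟨hleft, hleft'⟩ := edgeWeight_mem_Icc hL₁ hL₂ h hT.1
  obtain ⟨hright, hright'⟩ := edgeWeight_mem_Icc hL₁ hL₂ h hT.2.2
  have : 0 ≤ 1 / (L - 1) := one_div_nonneg.mpr (by linarith)
  rw [tripletWeight, add_sub_cancel_left]
  constructor <;> linarith

theorem letterWeight_eq_mul_tripletWeight_Tinit (hL₁ : 2 < L) (hL₂ : L < 3)
    (h : L ^ (d - 1) * (L - 2) ^ 2 = 1) {j : ℕ} (hj : j ≤ d - 1) :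
    letterWeight d L j = (3 - L) * tripletWeight d L (Tinit d j) := by
  have h₁ : L - 1 ≠ 0 := by linarith
  have h₂ : L - 2 ≠ 0 := by linarith
  have h₃ : 3 - L ≠ 0 := by linarith
  have hpow : L ^ (d - 1) - 1 = (L - 1) * (3 - L) / (L - 2) ^ 2 := by
    rw [eq_div_iff (pow_ne_zero 2 h₂)]
    linarith
  unfold tripletWeight Tinit edgeWeight
  rw [hpow]
  split_ifs with hjd
  · rw [weight_cons, weight_nil, hjd, letterWeight_of_le hL₁ h le_rfl]
    field_simp
    ring
  · rw [weight_nil, letterWeight, min_eq_left hj]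
    field_simp
    ring

/-- The error in the approximation of `|φᵐ(w)|` by `C Lᵐ weight(w)`. -/
noncomputable def lengthError (d : ℕ) (L C : ℝ) (m : ℕ) (w : List ℕ) : ℝ :=
  imageLength (phiL d) m w - C * (L ^ m * weight (letterWeight d L) w)

theorem lengthError_append (d : ℕ) (L C : ℝ) (m : ℕ) (v w : List ℕ) :
    lengthError d L C m (v ++ w) = lengthError d L C m v + lengthError d L C m w := by
  rw [lengthError, imageLength_append, weight_append, Nat.cast_add, lengthError, lengthError]
  ring

theorem lengthError_phiW (hL : 2 < L) (h : L ^ (d - 1) * (L - 2) ^ 2 = 1) (C : ℝ) (m : ℕ)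
    (w : List ℕ) : lengthError d L C m (phiW d w) = lengthError d L C (m + 1) w := by
  rw [lengthError, lengthError, imageLength_succ, pow_succ, mul_assoc (L ^ m),
    ← weight_flatMap (weight_phiL hL h)]
  rfl

theorem weight_spacer_le (hL : 2 < L) (h : L ^ (d - 1) * (L - 2) ^ 2 = 1) (α : ℕ) :
    weight (letterWeight d L) (spacer d α) ≤ 1 / (L - 2) := by
  unfold spacer
  split_ifs
  · rw [weight_cons, weight_nil, add_zero]
    exact (letterWeight_mem_Icc hL h _).2
  · exact one_div_nonneg.mpr (by linarith)

theorem abs_lengthError_fmap_le (hL : 2 < L) (h : L ^ (d - 1) * (L - 2) ^ 2 = 1) (hK : 0 ≤ K)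
    (hE : ∀ m w, |lengthError d L C m w| ≤ K * 2 ^ m * weight (letterWeight d L) w)
    (T : ℕ × List ℕ × ℕ) (m : ℕ) :
    |lengthError d L C m (fmap d T).2.1| ≤
      |lengthError d L C (m + 1) T.2.1| + K * 2 ^ m * (1 + 2 * (1 / (L - 2))) := by
  set s := [0] ++ (spacer d T.1 ++ spacer d T.2.2)
  have hs : weight (letterWeight d L) s ≤ 1 + 2 * (1 / (L - 2)) := by
    rw [weight_append, weight_append, weight_cons, weight_nil, letterWeight_zero d hL]
    linarith [weight_spacer_le hL h T.1, weight_spacer_le hL h T.2.2]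
  have hsplit : lengthError d L C m (fmap d T).2.1 =
      lengthError d L C (m + 1) T.2.1 + lengthError d L C m s := by
    simp only [s, fmap_eq, lengthError_append, lengthError_phiW hL h]
    ring
  rw [hsplit]
  refine (abs_add_le _ _).trans (add_le_add_right ((hE m s).trans ?_) _)
  gcongr

theorem abs_lengthError_iterate_fmap_le (hL : 2 < L) (h : L ^ (d - 1) * (L - 2) ^ 2 = 1)
    (hK : 0 ≤ K)
    (hE : ∀ m w, |lengthError d L C m w| ≤ K * 2 ^ m * weight (letterWeight d L) w)
    (T : ℕ × List ℕ × ℕ) (n m : ℕ) :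
    |lengthError d L C m ((fmap d)^[n] T).2.1| ≤ K * 2 ^ (m + n) * weight (letterWeight d L) T.2.1 +
      K * (2 ^ (m + n) - 2 ^ m) * (1 + 2 * (1 / (L - 2))) := by
  induction n generalizing m with
  | zero => simpa using hE m T.2.1
  | succ n ih =>
    rw [Function.iterate_succ_apply']
    have hstep := abs_lengthError_fmap_le hL h hK hE ((fmap d)^[n] T) m
    have hm := ih (m + 1)
    rw [Nat.add_right_comm m 1 n, pow_succ 2 m] at hm
    rw [← Nat.add_assoc]
    linarith

theorem tendsto_div_pow_of_abs_sub_le {a : ℕ → ℝ} {c ρ : ℝ} (hρ : 0 ≤ ρ) (hρL : ρ < L)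
    (ha : ∀ n, |a n - L ^ n * c| ≤ K * ρ ^ n) :
    Filter.Tendsto (fun n => a n / L ^ n) Filter.atTop (nhds c) := by
  have hL : 0 < L := hρ.trans_lt hρL
  have hgeom : Filter.Tendsto (fun n => K * (ρ / L) ^ n) Filter.atTop (nhds 0) := by
    simpa using (tendsto_pow_atTop_nhds_zero_of_lt_one (div_nonneg hρ hL.le)
      ((div_lt_one hL).mpr hρL)).const_mul K
  refine tendsto_iff_dist_tendsto_zero.mpr (squeeze_zero (fun _ => dist_nonneg) (fun n => ?_) hgeom)
  have hLn : 0 < L ^ n := pow_pos hL n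
  rw [Real.dist_eq, div_sub' hLn.ne', abs_div, abs_of_pos hLn, div_pow, mul_div_assoc']
  exact div_le_div_of_nonneg_right (ha n) hLn.le

theorem tendsto_imageLength_div_pow (hL : 2 < L)
    (hE : ∀ m w, |lengthError d L C m w| ≤ K * 2 ^ m * weight (letterWeight d L) w) (w : List ℕ) :
    Filter.Tendsto (fun n => (imageLength (phiL d) n w : ℝ) / L ^ n) Filter.atTop
      (nhds (C * weight (letterWeight d L) w)) := by
  refine tendsto_div_pow_of_abs_sub_le (K := K * weight (letterWeight d L) w) zero_le_two hL
    fun n => ?_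
  have hn := hE n w
  rwa [lengthError, mul_left_comm, mul_right_comm] at hn

theorem tendsto_length_iterate_fmap_div_pow (hd : 2 ≤ d) (hL₁ : 2 < L) (hL₂ : L < 3)
    (h : L ^ (d - 1) * (L - 2) ^ 2 = 1) (hK : 0 ≤ K) (hC : 0 ≤ C)
    (hE : ∀ m w, |lengthError d L C m w| ≤ K * 2 ^ m * weight (letterWeight d L) w)
    (hT : T ∈ alphabetTriplets d) :
    Filter.Tendsto (fun n => (((fmap d)^[n] T).2.1.length : ℝ) / L ^ n) Filter.atTop
      (nhds (C * tripletWeight d L T)) := by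
  set Q := 1 + 2 * (1 / (L - 2))
  set S := 2 * edgeWeight d L (d - 1) + 1 / (L - 1)
  refine tendsto_div_pow_of_abs_sub_le
    (K := K * weight (letterWeight d L) T.2.1 + K * Q + C * S) zero_le_two hL₁ fun n => ?_
  have herror := abs_lengthError_iterate_fmap_le hL₁ h hK hE T n 0
  obtain ⟨hS₀, hS⟩ := tripletWeight_sub_weight_mem_Icc hL₁ hL₂ h
    (iterate_fmap_mem_alphabetTriplets hd hT n)
  rw [tripletWeight_iterate_fmap hd hL₁ hL₂ h hT] at hS₀ hS
  rw [lengthError, imageLength_zero, pow_zero, one_mul, Nat.zero_add, pow_zero] at herror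
  set W := weight (letterWeight d L) ((fmap d)^[n] T).2.1
  have hinv : 0 ≤ 1 / (L - 2) := one_div_nonneg.mpr (by linarith)
  have hQ : 0 ≤ K * Q := mul_nonneg hK (by positivity)
  have hCS := mul_le_mul_of_nonneg_left hS hC
  have hCS₀ := mul_nonneg hC hS₀
  have hCS' := le_mul_of_one_le_right (hCS₀.trans hCS) (one_le_pow₀ (one_le_two (α := ℝ)) (n := n))
  rw [abs_le] at herror ⊢
  constructor <;> linarith

theorem tendsto_length_iterate_fmap_div_imageLength (hd : 2 ≤ d) (hL₁ : 2 < L) (hL₂ : L < 3)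
    (h : L ^ (d - 1) * (L - 2) ^ 2 = 1) {j : ℕ} (hj : j ≤ d - 1) :
    Filter.Tendsto (fun n => (((fmap d)^[n] (Tinit d j)).2.1.length : ℝ) /
      imageLength (phiL d) n [j]) Filter.atTop (nhds (1 / (3 - L))) := by
  obtain ⟨C, hC, hE⟩ := exists_abs_imageLength_phiL_sub_le hL₁ h
  have hnum := tendsto_length_iterate_fmap_div_pow hd hL₁ hL₂ h (by linarith) hC.le hE
    (Tinit_mem_alphabetTriplets hd hj)
  have hden := tendsto_imageLength_div_pow hL₁ hE [j]
  have hℓ : 0 < letterWeight d L j := one_pos.trans_le (letterWeight_mem_Icc hL₁ h j).1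
  rw [weight_cons, weight_nil, add_zero] at hden
  have hratio : C * tripletWeight d L (Tinit d j) / (C * letterWeight d L j) = 1 / (3 - L) := by
    rw [mul_div_mul_left _ _ hC.ne', div_eq_div_iff hℓ.ne' (by linarith), one_mul, mul_comm]
    exact (letterWeight_eq_mul_tripletWeight_Tinit hL₁ hL₂ h hj).symm
  refine hratio ▸ (hnum.div hden (mul_pos hC hℓ).ne').congr fun n => ?_
  exact div_div_div_cancel_right₀ (pow_pos (by linarith) n).ne' _ _

end Weights

theorem statement18_general (d : ℕ) (u : ℕ → ℕ) (hu : IsPhiFixed d u) (j : ℕ) (hj : j ≤ d - 1)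
    (Λ : ℝ) (hΛ1 : 2 < Λ) (hΛ2 : Λ < 3) (hΛ : Λ ^ (d - 1) * (Λ - 2) ^ 2 = 1)
    (w : ℕ → List ℕ) (hw : ∀ n, w n = ((fmap d)^[n] (Tinit d j)).2.1)
    (r : ℕ → List ℕ) (hr : ∀ n, ReturnWord u (w n) (r n))
    (hrmin : ∀ n, ∀ r' : List ℕ, ReturnWord u (w n) r' → (r n).length ≤ r'.length) :
    Filter.limsup (fun n : ℕ => ((w n).length : ℝ) / ((r n).length : ℝ))
        Filter.atTop ≤ 1 / (3 - Λ) ∧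
    ((j = 0 ∨ j = d - 1) →
      Filter.Tendsto (fun n : ℕ => ((w n).length : ℝ) / ((r n).length : ℝ))
        Filter.atTop (nhds (1 / (3 - Λ)))) := by
  have hd : 2 ≤ d := by
    by_contra! hd'
    rw [show d - 1 = 0 by omega, pow_zero, one_mul] at hΛ
    nlinarith
  obtain rfl : w = fun n => ((fmap d)^[n] (Tinit d j)).2.1 := funext hw
  have hlim := tendsto_length_iterate_fmap_div_imageLength hd hΛ1 hΛ2 hΛ hj
  have hlower : ∀ᶠ n in Filter.atTop, imageLength (phiL d) n [j] ≤ (r n).length :=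
    (Filter.eventually_ge_atTop (d - 1)).mono fun n hn =>
      hu.imageLength_le_length_returnWord hd hj hn (hr n)
  constructor
  · rw [← hlim.limsup_eq]
    refine Filter.limsup_le_limsup (hlower.mono fun n hn => ?_)
      (Filter.isCoboundedUnder_le_of_le _ fun n => by positivity) hlim.isBoundedUnder_le
    have hpos := imageLength_phiL_pos d n (List.cons_ne_nil j [])
    exact div_le_div_of_nonneg_left (by positivity) (by exact_mod_cast hpos) (by exact_mod_cast hn)
  · intro hj'
    refine hlim.congr' (hlower.mono fun n hn => ?_)
    obtain ⟨r', hr', hle⟩ := hu.exists_returnWord_length_le_imageLength hd hj' n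
    rw [hn.antisymm ((hrmin n r' hr').trans hle)]

/-- Let `d ≥ 3`, `k ≤ d−1`, let `w_n` be the middle component of
`f^n(T_{d−1−k})` and `r_n` a shortest return word to `w_n` in `u_d`. Then
`limsup |w_n|/|r_n| ≤ 1/(3 − Λ_d)`, where `Λ_d` is the unique real in `(2,3)` with
`Λ_d^{d−1}(Λ_d−2)^2 = 1`, and equality holds for `k = 0` and `k = d−1`. -/
theorem statement18 (d : ℕ) (hd : 3 ≤ d) (u : ℕ → ℕ) (hu : IsPhiFixed d u)
    (k : ℕ) (hk : k ≤ d - 1)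
    (Λ : ℝ) (hΛ1 : 2 < Λ) (hΛ2 : Λ < 3) (hΛ : Λ ^ (d - 1) * (Λ - 2) ^ 2 = 1)
    (w : ℕ → List ℕ) (hw : ∀ n, w n = ((fmap d)^[n] (Tinit d (d - 1 - k))).2.1)
    (r : ℕ → List ℕ) (hr : ∀ n, ReturnWord u (w n) (r n))
    (hrmin : ∀ n, ∀ r' : List ℕ, ReturnWord u (w n) r' → (r n).length ≤ r'.length) :
    Filter.limsup (fun n : ℕ => ((w n).length : ℝ) / ((r n).length : ℝ))
        Filter.atTop ≤ 1 / (3 - Λ) ∧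
    ((k = 0 ∨ k = d - 1) →
      Filter.limsup (fun n : ℕ => ((w n).length : ℝ) / ((r n).length : ℝ))
        Filter.atTop = 1 / (3 - Λ)) := by
  obtain ⟨hle, hlim⟩ :=
    statement18_general d u hu (d - 1 - k) (by omega) Λ hΛ1 hΛ2 hΛ w hw r hr hrmin
  exact ⟨hle, fun hk' => (hlim (by omega)).limsup_eq⟩

end RichRT
end
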